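/- arXiv:1204.2306 — 2 statements merged into one kernel-verified Lean document; each statement's English description precedes it below -/
import Mathlib

section
/- Let G be a connected graph that is not a cycle, with m ≥ 1 edges, n vertices, h heavy edges, and ℓ leaves. If every heavy vertex of G is adjacent to at least three light vertices and ℓ + m ≥ h + n + 2, then λ(G^c) = ℓ + m − h − 2 and ρ(G^c) = ℓ + m − h − n − 1, where G^c denotes the complement of G. -/
namespace PaperPC

open SimpleGraph

variable {V : Type*}

/-- The degree of a vertex, via the cardinality of its neighbor set. -/
noncomputable def ndeg (G : SimpleGraph V) (v : V) : ℕ := (G.neighborSet v).ncard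

/-- A linear forest: an acyclic graph of maximum degree at most 2,
i.e. a vertex-disjoint union of paths.  A spanning linear subforest of `G`
is exactly a path covering of `G` (isolated vertices are one-vertex paths). -/
def IsLinearForest (H : SimpleGraph V) : Prop :=
  H.IsAcyclic ∧ ∀ v, ndeg H v ≤ 2

/-- The number of paths of a path covering = number of connected components. -/
noncomputable def numPaths (H : SimpleGraph V) : ℕ := Nat.card H.ConnectedComponent

/-- The path covering number `P(G)`. -/
noncomputable def pathCoverNumber (G : SimpleGraph V) : ℕ :=
  sInf {k | ∃ H ≤ G, IsLinearForest H ∧ numPaths H = k}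

/-- `H` is a minimum path covering of `G`. -/
def IsMinPathCover (G H : SimpleGraph V) : Prop :=
  H ≤ G ∧ IsLinearForest H ∧ numPaths H = pathCoverNumber G

open scoped Classical in
/-- The path sequence of a path covering: the multiset of the numbers of vertices
of its paths (a multiset encodes the nondecreasing ordered sequence). -/
noncomputable def pathSeq [Fintype V] (H : SimpleGraph V) : Multiset ℕ :=
  (Finset.univ : Finset H.ConnectedComponent).val.map fun c => c.supp.ncard

/-- `G` admits a unique path sequence. -/
def UniquePathSequence [Fintype V] (G : SimpleGraph V) : Prop :=
  ∀ H₁ H₂ : SimpleGraph V, IsMinPathCover G H₁ → IsMinPathCover G H₂ →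
    pathSeq H₁ = pathSeq H₂

/-- Number of leaves (vertices of degree 1). -/
noncomputable def numLeaves (G : SimpleGraph V) : ℕ := {v | ndeg G v = 1}.ncard

/-- Number of heavy edges (edges both of whose endpoints have degree > 2). -/
noncomputable def numHeavyEdges (G : SimpleGraph V) : ℕ :=
  {e ∈ G.edgeSet | ∀ v ∈ e, 2 < ndeg G v}.ncard

/-- Number of edges. -/
noncomputable def numEdges (G : SimpleGraph V) : ℕ := G.edgeSet.ncard

/-- A graph is 2-sparse if no two adjacent vertices both have degree > 2. -/
def TwoSparse (G : SimpleGraph V) : Prop :=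
  ∀ u v, G.Adj u v → ndeg G u ≤ 2 ∨ ndeg G v ≤ 2

/-- `G` is a path graph. -/
def IsPathGraph (G : SimpleGraph V) : Prop := G.IsTree ∧ ∀ v, ndeg G v ≤ 2

/-- `G` is a cycle graph. -/
def IsCycleGraph (G : SimpleGraph V) : Prop := G.Connected ∧ ∀ v, ndeg G v = 2

/-- A generalized star: a tree with exactly one heavy vertex (the center) in which
all vines have the same number of vertices (equivalently, all leaves are at the same
distance from the center). -/
def IsGenStar (G : SimpleGraph V) : Prop :=
  G.IsTree ∧ ∃ c k, 2 < ndeg G c ∧ (∀ v, v ≠ c → ndeg G v ≤ 2) ∧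
    ∀ v, ndeg G v = 1 → G.dist c v = k

/-- An L(2,1)-labeling. -/
def IsL21Labeling (G : SimpleGraph V) (f : V → ℕ) : Prop :=
  (∀ u v, G.Adj u v → 2 ≤ Nat.dist (f u) (f v)) ∧
  (∀ u v, G.dist u v = 2 → 1 ≤ Nat.dist (f u) (f v))

/-- `λ(G)`: the least `k` such that `G` has an L(2,1)-labeling with labels in `{0,…,k}`. -/
noncomputable def lambdaNum (G : SimpleGraph V) : ℕ :=
  sInf {k | ∃ f : V → ℕ, IsL21Labeling G f ∧ ∀ v, f v ≤ k}

/-- A λ-labeling: an L(2,1)-labeling with maximum label `λ(G)`. -/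
def IsLambdaLabeling (G : SimpleGraph V) (f : V → ℕ) : Prop :=
  IsL21Labeling G f ∧ (∀ v, f v ≤ lambdaNum G) ∧ ∃ v, f v = lambdaNum G

/-- The set of holes of a labeling: unused labels `h` with `1 ≤ h ≤ λ(G) - 1`. -/
def labHoles (G : SimpleGraph V) (f : V → ℕ) : Set ℕ :=
  {h | 1 ≤ h ∧ h + 1 ≤ lambdaNum G ∧ ∀ v, f v ≠ h}

/-- The hole index `ρ(G)`: minimum number of holes over all λ-labelings. -/
noncomputable def holeIndex (G : SimpleGraph V) : ℕ :=
  sInf {k | ∃ f : V → ℕ, IsLambdaLabeling G f ∧ (labHoles G f).ncard = k}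

open scoped Classical in
/-- The island sequence of a labeling: the multiset of cardinalities of the maximal
intervals `[a,b]` of consecutive integers all used by the labeling. -/
noncomputable def islandSeq [Fintype V] (G : SimpleGraph V) (f : V → ℕ) : Multiset ℕ :=
  (((Finset.range (lambdaNum G + 1)) ×ˢ (Finset.range (lambdaNum G + 1))).filter
    (fun q => q.1 ≤ q.2 ∧ (∀ x ∈ Finset.Icc q.1 q.2, ∃ v, f v = x) ∧
      (q.1 = 0 ∨ ∀ v, f v ≠ q.1 - 1) ∧ ∀ v, f v ≠ q.2 + 1)).val.map
    fun q => q.2 - q.1 + 1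

/-- `G` admits (at least) two distinct island sequences. -/
def MultipleIslandSequences [Fintype V] (G : SimpleGraph V) : Prop :=
  ∃ f g : V → ℕ, IsLambdaLabeling G f ∧ IsLambdaLabeling G g ∧
    (labHoles G f).ncard = holeIndex G ∧ (labHoles G g).ncard = holeIndex G ∧
    islandSeq G f ≠ islandSeq G g

/-- A vine: a maximal path one of whose endpoints (`a`) is a leaf and all of whose
vertices are light.  Maximality: any light vertex adjacent to the other end already
lies on the path. -/
def IsVine (G : SimpleGraph V) {a b : V} (p : G.Walk a b) : Prop :=
  p.IsPath ∧ ndeg G a = 1 ∧ (∀ v ∈ p.support, ndeg G v ≤ 2) ∧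
  ∀ c, G.Adj b c → ndeg G c ≤ 2 → c ∈ p.support

/-- A vine with center `v`: the (heavy) vertex adjacent to the non-leaf end of the vine. -/
def IsVineWithCenter (G : SimpleGraph V) {a b : V} (p : G.Walk a b) (v : V) : Prop :=
  IsVine G p ∧ G.Adj b v ∧ 2 < ndeg G v

/-- The matching number of the subgraph of `G` induced by `S`. -/
noncomputable def matchingNumberOn (G : SimpleGraph V) (S : Set V) : ℕ :=
  sSup {k | ∃ M : Set (Sym2 V), M ⊆ G.edgeSet ∧ (∀ e ∈ M, ∀ v ∈ e, v ∈ S) ∧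
    (∀ e ∈ M, ∀ f ∈ M, e ≠ f → ∀ v, v ∈ e → v ∉ f) ∧ M.ncard = k}

/-- Labels used in the family `F`: `A`, or `B k` where `k` records the number of
vertices of each vine of the labeled generalized star that produced the label. -/
inductive Lab | A | B (k : ℕ)

/-- A labeled generalized star with center `c` whose vines have `k` vertices each
(equivalently, every leaf is at distance `k` from `c`); the degenerate case
`deg c = 2` is the convention regarding a path of length `2k` as a labeled
generalized star with two vines.  The neighbors of the center are labeled `B k`,
the other non-leaf vertices (and the center) are labeled `A`, leaves are unlabeled. -/
def IsLGenStar {W : Type*} (H : SimpleGraph W) (c : W) (k : ℕ)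
    (lab : W → Option Lab) : Prop :=
  H.IsTree ∧ 2 ≤ ndeg H c ∧ (∀ v, v ≠ c → ndeg H v ≤ 2) ∧
  (∀ v, ndeg H v = 1 → H.dist c v = k) ∧
  lab c = some Lab.A ∧
  (∀ v, H.Adj c v → lab v = some (Lab.B k)) ∧
  (∀ v, v ≠ c → ¬H.Adj c v → ndeg H v = 1 → lab v = none) ∧
  (∀ v, v ≠ c → ¬H.Adj c v → 2 ≤ ndeg H v → lab v = some Lab.A)

/-- A labeled path: a path with at least three vertices, non-leaf vertices labeled `A`. -/
def IsLPath {W : Type*} (H : SimpleGraph W) (lab : W → Option Lab) : Prop :=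
  H.IsTree ∧ (∀ v, ndeg H v ≤ 2) ∧ 3 ≤ Nat.card W ∧
  (∀ v, ndeg H v = 1 → lab v = none) ∧
  ∀ v, 2 ≤ ndeg H v → lab v = some Lab.A

/-- The induced subgraph of `T` on `s` is a labeled generalized star. -/
def LGenStarOn (T : SimpleGraph V) (s : Set V) (c : V) (k : ℕ)
    (lab : V → Option Lab) : Prop :=
  ∃ hc : c ∈ s, IsLGenStar (T.induce s) ⟨c, hc⟩ k fun v => lab v.1

/-- The induced subgraph of `T` on `s` is a labeled path. -/
def LPathOn (T : SimpleGraph V) (s : Set V) (lab : V → Option Lab) : Prop :=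
  IsLPath (T.induce s) fun v => lab v.1

/-- The family `F` of labeled trees, realized as induced subgraphs (on vertex sets `s`)
of an ambient graph `T`:  start from a labeled generalized star with at least three
vines or from a labeled path, and repeatedly attach, via a single new edge, a labeled
generalized star with at least three vines at a vertex labeled `A` (Type-1), a labeled
path by one of its non-leaf vertices at a vertex labeled `A` (Type-2), or a labeled
generalized star whose vines have the same number of vertices `k` as those of the star
that labeled `u` with `B k`, at a vertex `u` labeled `B k` (Type-3). -/
inductive InF (T : SimpleGraph V) : Set V → (V → Option Lab) → Prop
  | base_star (s : Set V) (c : V) (k : ℕ) (lab : V → Option Lab) :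
      LGenStarOn T s c k lab → 3 ≤ {w ∈ s | T.Adj c w}.ncard → InF T s lab
  | base_path (s : Set V) (lab : V → Option Lab) :
      LPathOn T s lab → InF T s lab
  | type1 (s : Set V) (lab : V → Option Lab) (t : Set V) (lab' : V → Option Lab)
      (u c : V) (k : ℕ) :
      InF T s lab → Disjoint s t → u ∈ s → c ∈ t → lab u = some Lab.A →
      LGenStarOn T t c k lab' → 3 ≤ {w ∈ t | T.Adj c w}.ncard →
      (∀ x ∈ s, ∀ y ∈ t, (T.Adj x y ↔ x = u ∧ y = c)) →
      (∀ x ∈ s, lab' x = lab x) →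
      InF T (s ∪ t) lab'
  | type2 (s : Set V) (lab : V → Option Lab) (t : Set V) (lab' : V → Option Lab)
      (u v : V) :
      InF T s lab → Disjoint s t → u ∈ s → v ∈ t → lab u = some Lab.A →
      LPathOn T t lab' → 2 ≤ {w ∈ t | T.Adj v w}.ncard →
      (∀ x ∈ s, ∀ y ∈ t, (T.Adj x y ↔ x = u ∧ y = v)) →
      (∀ x ∈ s, lab' x = lab x) →
      InF T (s ∪ t) lab'
  | type3 (s : Set V) (lab : V → Option Lab) (t : Set V) (lab' : V → Option Lab)
      (u c : V) (k : ℕ) :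
      InF T s lab → Disjoint s t → u ∈ s → c ∈ t → lab u = some (Lab.B k) →
      LGenStarOn T t c k lab' →
      (∀ x ∈ s, ∀ y ∈ t, (T.Adj x y ↔ x = u ∧ y = c)) →
      (∀ x ∈ s, lab' x = lab x) →
      InF T (s ∪ t) lab'

/-- `G` is obtained from the tree `T` by expanding each edge of `T` into a complete
graph of arbitrary order: there is an embedding `ι` of the vertices of `T` and an
assignment `b` of a block of vertices of `G` to each edge of `T` such that an original
vertex lies in the block of an edge iff it is an endpoint of that edge, blocks of
distinct edges meet only in original vertices, every vertex of `G` lies in some block,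
and two distinct vertices of `G` are adjacent iff they lie in a common block. -/
def IsBlockExpansion {U W : Type*} (T : SimpleGraph U) (G : SimpleGraph W) : Prop :=
  ∃ (ι : U ↪ W) (b : Sym2 U → Set W),
    (∀ (u : U), ∀ e ∈ T.edgeSet, (ι u ∈ b e ↔ u ∈ e)) ∧
    (∀ e ∈ T.edgeSet, ∀ f ∈ T.edgeSet, e ≠ f → b e ∩ b f ⊆ Set.range ι) ∧
    (∀ w : W, ∃ e ∈ T.edgeSet, w ∈ b e) ∧
    (∀ x y : W, G.Adj x y ↔ x ≠ y ∧ ∃ e ∈ T.edgeSet, x ∈ b e ∧ y ∈ b e)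

/-- A system of nonempty vertex-disjoint `R`-chains covering all vertices. -/
structure IsPathSystem (R : V → V → Prop) (P : List (List V)) : Prop where
  ne_nil : ∀ l ∈ P, l ≠ []
  chain : ∀ l ∈ P, l.IsChain R
  nodup : P.flatten.Nodup
  cover : ∀ v, v ∈ P.flatten

/-- `x` and `y` are consecutive, in either order, in some list of `P`. -/
def Consec (P : List (List V)) (x y : V) : Prop :=
  ∃ l ∈ P, [x, y] <:+: l ∨ [y, x] <:+: l

/-- `a` is the first or the last entry of `l`. -/
def IsEnd (l : List V) (a : V) : Prop := (∃ t, l = a :: t) ∨ ∃ s, l = s ++ [a]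

lemma Consec.symm {P : List (List V)} {x y : V} (h : Consec P x y) : Consec P y x := by
  obtain ⟨l, hl, h⟩ := h
  exact ⟨l, hl, h.symm⟩

lemma IsPathSystem.perm {R : V → V → Prop} {P Q : List (List V)} (h : IsPathSystem R P)
    (hPQ : P.Perm Q) : IsPathSystem R Q where
  ne_nil l hl := h.ne_nil l (hPQ.mem_iff.2 hl)
  chain l hl := h.chain l (hPQ.mem_iff.2 hl)
  nodup := hPQ.flatten.nodup_iff.1 h.nodup
  cover v := hPQ.flatten.mem_iff.1 (h.cover v)

lemma IsPathSystem.mono {R S : V → V → Prop} {P : List (List V)} (h : IsPathSystem R P)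
    (hRS : ∀ u v, R u v → S u v) : IsPathSystem S P where
  ne_nil := h.ne_nil
  chain l hl := (h.chain l hl).imp hRS
  nodup := h.nodup
  cover := h.cover

lemma IsPathSystem.eq_of_mem {R : V → V → Prop} {P : List (List V)} (h : IsPathSystem R P)
    {l l' : List V} (hl : l ∈ P) (hl' : l' ∈ P) {v : V} (hv : v ∈ l) (hv' : v ∈ l') : l = l' := by
  have hp := (List.nodup_flatten.1 h.nodup).2
  by_contra hne
  have : Std.Symm (List.Disjoint (α := V)) := ⟨fun _ _ h => h.symm⟩
  exact hp.forall hl hl' hne hv hv'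

lemma IsPathSystem.nodup_of_mem {R : V → V → Prop} {P : List (List V)} (h : IsPathSystem R P)
    {l : List V} (hl : l ∈ P) : l.Nodup :=
  (List.nodup_flatten.1 h.nodup).1 l hl

lemma IsPathSystem.rel_of_infix {R : V → V → Prop} {P : List (List V)} (h : IsPathSystem R P)
    {l : List V} (hl : l ∈ P) {x y : V} (hxy : [x, y] <:+: l) : R x y := by
  simpa using (h.chain l hl).infix hxy

lemma IsPathSystem.exists_mem {R : V → V → Prop} {P : List (List V)} (h : IsPathSystem R P)
    (v : V) : ∃ l ∈ P, v ∈ l :=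
  List.mem_flatten.1 (h.cover v)

lemma exists_isPathSystem [Fintype V] (R : V → V → Prop) : ∃ P, IsPathSystem R P := by
  refine ⟨(Finset.univ : Finset V).toList.map fun v => [v], ?_, ?_, ?_, ?_⟩
  · simp
  · simp
  · have : ((Finset.univ : Finset V).toList.map fun v => [v]).flatten
        = (Finset.univ : Finset V).toList := by
      simp [← List.flatMap_def]
    rw [this]
    exact Finset.nodup_toList _
  · simp

/-- Every entry of a list that is not an end has a neighbour on both sides. -/
lemma exists_infix_of_not_isEnd {l : List V} {a : V} (ha : a ∈ l) (h : ¬ IsEnd l a) :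
    ∃ x y, [x, a, y] <:+: l := by
  obtain ⟨s, t, rfl⟩ := List.append_of_mem ha
  rcases List.eq_nil_or_concat s with rfl | ⟨s, x, rfl⟩
  · exact absurd (Or.inl ⟨t, rfl⟩) h
  rcases t with _ | ⟨y, t⟩
  · exact absurd (Or.inr ⟨_, rfl⟩) h
  exact ⟨x, y, s, t, by simp⟩

lemma infix_pair_left {l : List V} {x a y : V} (h : [x, a, y] <:+: l) : [x, a] <:+: l :=
  List.IsInfix.trans ⟨[], [y], rfl⟩ h

lemma infix_pair_right {l : List V} {x a y : V} (h : [x, a, y] <:+: l) : [a, y] <:+: l :=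
  List.IsInfix.trans ⟨[x], [], rfl⟩ h

lemma infix_pair_reverse {l : List V} {x y : V} :
    [x, y] <:+: l.reverse ↔ [y, x] <:+: l := by
  rw [← List.reverse_infix]
  simp

/-- Two lists of a path system with related ends can be joined. -/
lemma IsPathSystem.exists_merge {R : V → V → Prop} (hR : ∀ u v, R u v → R v u)
    {P : List (List V)} (h : IsPathSystem R P) {l₁ l₂ : List V} (h₁ : l₁ ∈ P) (h₂ : l₂ ∈ P)
    (hne : l₁ ≠ l₂) {a b : V} (ha : IsEnd l₁ a) (hb : IsEnd l₂ b) (hab : R a b) :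
    ∃ Q, IsPathSystem R Q ∧ Q.length < P.length ∧ ∀ x y, Consec P x y → Consec Q x y := by
  classical
  have hperm : P.Perm (l₁ :: l₂ :: (P.erase l₁).erase l₂) :=
    (List.perm_cons_erase h₁).trans
      ((List.perm_cons_erase ((List.mem_erase_of_ne hne.symm).2 h₂)).cons _)
  generalize (P.erase l₁).erase l₂ = P' at hperm
  obtain ⟨m₁, hm₁, s, rfl⟩ : ∃ m, (m = l₁ ∨ m = l₁.reverse) ∧ ∃ s, m = s ++ [a] := by
    rcases ha with ⟨t, rfl⟩ | ⟨s, rfl⟩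
    · exact ⟨_, Or.inr rfl, t.reverse, by simp⟩
    · exact ⟨_, Or.inl rfl, s, rfl⟩
  obtain ⟨m₂, hm₂, t, rfl⟩ : ∃ m, (m = l₂ ∨ m = l₂.reverse) ∧ ∃ t, m = b :: t := by
    rcases hb with ⟨t, rfl⟩ | ⟨s, rfl⟩
    · exact ⟨_, Or.inl rfl, t, rfl⟩
    · exact ⟨_, Or.inr rfl, s.reverse, by simp⟩
  have hp := h.perm hperm
  have flip : ∀ {m l : List V}, m = l ∨ m = l.reverse → l.IsChain R → m.IsChain R := by
    rintro m l (rfl | rfl) hl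
    · exact hl
    · exact List.isChain_reverse.2 (hl.imp fun u v => hR u v)
  have c₁ := flip hm₁ (hp.chain l₁ (by simp))
  have c₂ := flip hm₂ (hp.chain l₂ (by simp))
  have hperm₁ : (s ++ [a]).Perm l₁ := by
    rcases hm₁ with h | h
    · rw [h]
    · rw [h]; exact List.reverse_perm _
  have hperm₂ : (b :: t).Perm l₂ := by
    rcases hm₂ with h | h
    · rw [h]
    · rw [h]; exact List.reverse_perm _
  have hfl : (((s ++ [a]) ++ (b :: t)) :: P').flatten.Perm (l₁ :: l₂ :: P').flatten := by
    simp only [List.flatten_cons, ← List.append_assoc]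
    exact (hperm₁.append hperm₂).append_right _
  have hcon : ∀ {m l : List V}, m = l ∨ m = l.reverse → ∀ {x y}, [x, y] <:+: l →
      [x, y] <:+: m ∨ [y, x] <:+: m := by
    rintro m l (rfl | rfl) x y hl
    · exact Or.inl hl
    · exact Or.inr (infix_pair_reverse.2 hl)
  refine ⟨((s ++ [a]) ++ (b :: t)) :: P', ⟨?_, ?_, ?_, ?_⟩, ?_, ?_⟩
  · intro l hl
    rcases List.mem_cons.1 hl with rfl | hl
    · simp
    · exact hp.ne_nil l (by simp [hl])
  · intro l hl
    rcases List.mem_cons.1 hl with rfl | hl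
    · rw [List.isChain_append]
      exact ⟨c₁, c₂, by simpa using hab⟩
    · exact hp.chain l (by simp [hl])
  · exact hfl.nodup_iff.2 hp.nodup
  · exact fun v => hfl.mem_iff.2 (hp.cover v)
  · simp [hperm.length_eq]
  · have key : ∀ x y l, l ∈ P → [x, y] <:+: l → Consec (((s ++ [a]) ++ (b :: t)) :: P') x y := by
      intro x y l hl hxy
      rcases List.mem_cons.1 (hperm.mem_iff.1 hl) with rfl | hl
      · refine ⟨_, List.mem_cons_self, ?_⟩
        exact (hcon hm₁ hxy).imp (·.trans ⟨[], b :: t, by simp⟩) (·.trans ⟨[], b :: t, by simp⟩)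
      rcases List.mem_cons.1 hl with rfl | hl
      · refine ⟨_, List.mem_cons_self, ?_⟩
        exact (hcon hm₂ hxy).imp (·.trans ⟨s ++ [a], [], by simp⟩)
          (·.trans ⟨s ++ [a], [], by simp⟩)
      · exact ⟨l, List.mem_cons_of_mem _ hl, Or.inl hxy⟩
    rintro x y ⟨l, hl, hxy | hxy⟩
    · exact key x y l hl hxy
    · exact (key y x l hl hxy).symm

/-- An end of a duplicate-free list has at most one neighbour in that list. -/
lemma IsEnd.consec_unique {l : List V} (hl : l.Nodup) {v : V} (hv : IsEnd l v) {x y : V}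
    (hx : [v, x] <:+: l ∨ [x, v] <:+: l) (hy : [v, y] <:+: l ∨ [y, v] <:+: l) : x = y := by
  have key : ∀ (t : List V) (x : V), (v :: t).Nodup →
      [v, x] <:+: v :: t ∨ [x, v] <:+: v :: t → ∃ t', t = x :: t' := by
    intro t x hn hx
    rw [List.infix_cons_iff, List.infix_cons_iff] at hx
    have hvt : v ∉ t := (List.nodup_cons.1 hn).1
    rcases hx with (h | h) | (h | h)
    · obtain ⟨r, hr⟩ := h
      exact ⟨r, by simpa using hr.symm⟩
    · exact absurd (h.subset (by simp)) hvt
    · obtain ⟨r, hr⟩ := h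
      simp only [List.cons_append, List.nil_append, List.cons.injEq] at hr
      exact absurd (by simp [← hr.2]) hvt
    · exact absurd (h.subset (by simp)) hvt
  have fin : ∀ t : List V, (v :: t).Nodup →
      [v, x] <:+: v :: t ∨ [x, v] <:+: v :: t → [v, y] <:+: v :: t ∨ [y, v] <:+: v :: t →
      x = y := by
    intro t hn hx hy
    obtain ⟨t₁, h₁⟩ := key t x hn hx
    obtain ⟨t₂, h₂⟩ := key t y hn hy
    rw [h₁] at h₂
    exact (List.cons.inj h₂).1
  rcases hv with ⟨t, rfl⟩ | ⟨s, rfl⟩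
  · exact fin t hl hx hy
  · refine fin s.reverse (by simpa using (List.nodup_reverse.2 hl)) ?_ ?_
    · rw [← List.reverse_concat', infix_pair_reverse, infix_pair_reverse]
      exact hx.symm
    · rw [← List.reverse_concat', infix_pair_reverse, infix_pair_reverse]
      exact hy.symm

lemma IsEnd.eq_or_eq {l : List V} {a b c : V} (ha : IsEnd l a) (hb : IsEnd l b) (hc : IsEnd l c)
    (hab : a ≠ b) (hac : a ≠ c) : b = c := by
  rcases ha with ⟨t, rfl⟩ | ⟨s, rfl⟩
  · rcases hb with ⟨t', h⟩ | ⟨s, h⟩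
    · exact absurd (List.cons.inj h).1 hab
    rcases hc with ⟨t', h'⟩ | ⟨s', h'⟩
    · exact absurd (List.cons.inj h').1 hac
    rw [h] at h'
    simpa using (List.append_inj' h' rfl).2
  · rcases hb with ⟨t, h⟩ | ⟨s', h⟩
    · rcases hc with ⟨t', h'⟩ | ⟨s', h'⟩
      · rw [h] at h'
        exact (List.cons.inj h').1
      · exact absurd (by simpa using (List.append_inj' h' rfl).2) hac
    · exact absurd (by simpa using (List.append_inj' h rfl).2) hab

/-- The consecutive pairs of a path system number at most `|V|` minus the number of its lists. -/
lemma IsPathSystem.card_pairs_add_length_le [Fintype V] {R : V → V → Prop} {P : List (List V)}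
    (h : IsPathSystem R P) (C : Finset (V × V))
    (hC : ∀ p ∈ C, ∃ l ∈ P, [p.1, p.2] <:+: l) : C.card + P.length ≤ Fintype.card V := by
  classical
  have hsub : C ⊆ (P.flatMap fun l => l.zip l.tail).toFinset := by
    intro p hp
    obtain ⟨l, hl, s, t, rfl⟩ := hC p hp
    rw [List.mem_toFinset, List.mem_flatMap]
    refine ⟨_, hl, ?_⟩
    clear hl
    induction s with
    | nil => simp
    | cons x s ih =>
      cases s with
      | nil => simp
      | cons y s => simpa using Or.inr ih
  have h1 : C.card ≤ (P.flatMap fun l => l.zip l.tail).length :=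
    (Finset.card_le_card hsub).trans (List.toFinset_card_le _)
  have h2 : ∀ P : List (List V), (∀ l ∈ P, l ≠ []) →
      (P.flatMap fun l => l.zip l.tail).length + P.length = P.flatten.length := by
    intro P hP
    induction P with
    | nil => simp
    | cons l P ih =>
      have := ih fun l hl => hP l (by simp [hl])
      have h3 := List.length_pos_iff.2 (hP l (by simp))
      simp only [List.flatMap_cons, List.length_append, List.length_zip, List.length_tail,
        List.length_cons, List.flatten_cons]
      omega
  have h4 := h2 P h.ne_nil
  have h5 := h.nodup.length_le_card
  omega

/-- The labels obtained by listing the paths one after another with one gap between them. -/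
lemma exists_label_of_chains [DecidableEq V] {R : V → V → Prop} (P : List (List V))
    (hne : ∀ l ∈ P, l ≠ []) (hch : ∀ l ∈ P, l.IsChain R) (hn : P.flatten.Nodup) :
    ∃ f : V → ℕ, (∀ u ∈ P.flatten, ∀ v ∈ P.flatten, f u = f v → u = v) ∧
      (∀ v ∈ P.flatten, f v + 2 ≤ P.flatten.length + P.length) ∧
      ∀ u ∈ P.flatten, ∀ v ∈ P.flatten, f u + 1 = f v → R u v := by
  induction P with
  | nil => exact ⟨fun _ => 0, by simp⟩
  | cons l P ih =>
    rw [List.flatten_cons, List.nodup_append] at hn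
    obtain ⟨hnl, hnP, hdisj⟩ := hn
    obtain ⟨f, hinj, hle, hadj⟩ := ih (fun l hl => hne l (by simp [hl]))
      (fun l hl => hch l (by simp [hl])) hnP
    have hidx : ∀ v ∈ l, l.idxOf v < l.length := fun v hv => List.idxOf_lt_length_iff.2 hv
    have hcl : ∀ u ∈ l, ∀ v ∈ l, l.idxOf u + 1 = l.idxOf v → R u v := by
      intro u hu v hv huv
      have := List.isChain_iff_getElem.1 (hch l (by simp)) (l.idxOf u)
        (by rw [huv]; exact hidx v hv)
      simpa [huv] using this
    refine ⟨fun v => if v ∈ l then l.idxOf v else f v + l.length + 1, ?_, ?_, ?_⟩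
    · intro u hu v hv huv
      simp only [List.flatten_cons, List.mem_append] at hu hv
      by_cases h1 : u ∈ l <;> by_cases h2 : v ∈ l <;> simp only [h1, h2, if_true, if_false] at huv
      · exact (List.idxOf_inj h1).1 huv
      · have := hidx u h1; omega
      · have := hidx v h2; omega
      · exact hinj u (by tauto) v (by tauto) (by omega)
    · intro v hv
      simp only [List.flatten_cons, List.mem_append, List.length_append, List.length_cons] at hv ⊢
      by_cases h1 : v ∈ l
      · have := hidx v h1
        simp only [h1, if_true]
        omega
      · have := hle v (by tauto)
        simp only [h1, if_false]
        omega
    · intro u hu v hv huv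
      simp only [List.flatten_cons, List.mem_append] at hu hv
      by_cases h1 : u ∈ l <;> by_cases h2 : v ∈ l <;> simp only [h1, h2, if_true, if_false] at huv
      · exact hcl u h1 v h2 huv
      · have := hidx u h1; omega
      · have := hidx v h2; omega
      · exact hadj u (by tauto) v (by tauto) (by omega)

lemma neighborSet_eq_pair [Finite V] {G : SimpleGraph V} {a x y : V} (ha : ndeg G a ≤ 2)
    (hx : G.Adj a x) (hy : G.Adj a y) (hxy : x ≠ y) : G.neighborSet a = {x, y} := by
  symm
  apply Set.eq_of_subset_of_ncard_le
  · rintro z (rfl | rfl)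
    · exact hx
    · exact hy
  · rw [Set.ncard_pair hxy]
    exact ha
  · exact Set.toFinite _

/-- In a path system of `G`, a light vertex having an unused edge is an end. -/
lemma IsPathSystem.isEnd_of_not_consec [Finite V] {G : SimpleGraph V} {R : V → V → Prop}
    {P : List (List V)} (h : IsPathSystem R P) (hRG : ∀ u v, R u v → G.Adj u v)
    {l : List V} (hl : l ∈ P) {a b : V} (hal : a ∈ l) (ha : ndeg G a ≤ 2) (hab : G.Adj a b)
    (hcon : ¬ Consec P a b) : IsEnd l a := by
  by_contra hend
  obtain ⟨x, y, hxy⟩ := exists_infix_of_not_isEnd hal hend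
  have hne : x ≠ y := by
    have := (h.nodup_of_mem hl).sublist hxy.sublist
    simp only [List.nodup_cons, List.mem_cons] at this
    tauto
  have hx := (hRG _ _ (h.rel_of_infix hl (infix_pair_left hxy))).symm
  have hy := hRG _ _ (h.rel_of_infix hl (infix_pair_right hxy))
  have hb : b ∈ G.neighborSet a := hab
  rw [neighborSet_eq_pair ha hx hy hne] at hb
  rcases hb with rfl | rfl
  · exact hcon ⟨l, hl, Or.inr (infix_pair_left hxy)⟩
  · exact hcon ⟨l, hl, Or.inl (infix_pair_right hxy)⟩

lemma eq_univ_of_adj_closed {G : SimpleGraph V} (hc : G.Connected) {S : Set V} {a : V}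
    (ha : a ∈ S) (hS : ∀ v ∈ S, ∀ w, G.Adj v w → w ∈ S) (v : V) : v ∈ S := by
  obtain ⟨p⟩ := hc.preconnected a v
  induction p with
  | nil => exact ha
  | cons h _ ih => exact ih (hS _ ha _ h)

/-- A connected graph containing a set closed under two light adjacencies is a cycle. -/
lemma isCycleGraph_of_two_neighbors [Finite V] {G : SimpleGraph V} (hc : G.Connected) {S : Set V}
    {a : V} (ha : a ∈ S) (hS : ∀ v ∈ S, ndeg G v ≤ 2)
    (h2 : ∀ v ∈ S, ∃ x ∈ S, ∃ y ∈ S, x ≠ y ∧ G.Adj v x ∧ G.Adj v y) : IsCycleGraph G := by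
  have huniv := eq_univ_of_adj_closed hc ha fun v hv w hw => by
    obtain ⟨x, hx, y, hy, hxy, hvx, hvy⟩ := h2 v hv
    have hw' : w ∈ G.neighborSet v := hw
    rw [neighborSet_eq_pair (hS v hv) hvx hvy hxy] at hw'
    rcases hw' with rfl | rfl
    · exact hx
    · exact hy
  refine ⟨hc, fun v => ?_⟩
  obtain ⟨x, hx, y, hy, hxy, hvx, hvy⟩ := h2 v (huniv v)
  rw [ndeg, neighborSet_eq_pair (hS v (huniv v)) hvx hvy hxy, Set.ncard_pair hxy]

/-- A connected graph that is not a cycle has a path system that uses exactly the edges joining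
two light vertices. -/
lemma exists_isPathSystem_light [Fintype V] {G : SimpleGraph V} (hc : G.Connected)
    (hnc : ¬ IsCycleGraph G) :
    ∃ P, IsPathSystem (fun u v => G.Adj u v ∧ ndeg G u ≤ 2 ∧ ndeg G v ≤ 2) P ∧
      ∀ u v, G.Adj u v → ndeg G u ≤ 2 → ndeg G v ≤ 2 → Consec P u v := by
  obtain ⟨P, hP, hmin⟩ := exists_minimalFor_of_wellFoundedLT
    (IsPathSystem fun u v => G.Adj u v ∧ ndeg G u ≤ 2 ∧ ndeg G v ≤ 2) List.length
    (exists_isPathSystem _)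
  refine ⟨P, hP, fun a b hab ha hb => ?_⟩
  by_contra hcon
  obtain ⟨l, hl, hal⟩ := hP.exists_mem a
  obtain ⟨l', hl', hbl'⟩ := hP.exists_mem b
  have hea := hP.isEnd_of_not_consec (fun _ _ h => h.1) hl hal ha hab hcon
  have heb := hP.isEnd_of_not_consec (fun _ _ h => h.1) hl' hbl' hb hab.symm
    fun h => hcon h.symm
  by_cases hll : l = l'
  · subst hll
    have hend : ∀ {a b : V}, ¬ Consec P a b → G.Adj a b → a ∈ l → b ∈ l → IsEnd l a →
        ∃ x ∈ l, ∃ y ∈ l, x ≠ y ∧ (G.Adj a x ∧ ndeg G a ≤ 2 ∧ ndeg G x ≤ 2) ∧ G.Adj a y := by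
      intro a b hcon hab hal hbl hea
      rcases hea with ⟨t, rfl⟩ | ⟨s, rfl⟩
      · rcases t with _ | ⟨x, t⟩
        · exact absurd (List.mem_singleton.1 hbl) hab.ne'
        have hinf : [a, x] <:+: a :: x :: t := ⟨[], t, by simp⟩
        refine ⟨x, by simp, b, hbl, ?_, hP.rel_of_infix hl hinf, hab⟩
        rintro rfl
        exact hcon ⟨_, hl, Or.inl hinf⟩
      · rcases List.eq_nil_or_concat s with rfl | ⟨s, x, rfl⟩
        · exact absurd (List.mem_singleton.1 hbl) hab.ne'
        have hinf : [x, a] <:+: s.concat x ++ [a] := ⟨s, [], by simp⟩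
        have hr := hP.rel_of_infix hl hinf
        refine ⟨x, by simp, b, hbl, ?_, ⟨hr.1.symm, hr.2.2, hr.2.1⟩, hab⟩
        rintro rfl
        exact hcon ⟨_, hl, Or.inr hinf⟩
    have key : ∀ v ∈ l, ∃ x ∈ l, ∃ y ∈ l, x ≠ y ∧
        (G.Adj v x ∧ ndeg G v ≤ 2 ∧ ndeg G x ≤ 2) ∧ G.Adj v y := by
      intro v hv
      by_cases hev : IsEnd l v
      · by_cases hva : v = a
        · subst hva
          exact hend hcon hab hal hbl' hea
        · obtain rfl : v = b := by
            exact hea.eq_or_eq hev heb (Ne.symm hva) hab.ne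
          exact hend (fun h => hcon h.symm) hab.symm hbl' hal heb
      · obtain ⟨x, y, hxy⟩ := exists_infix_of_not_isEnd hv hev
        have hne := (hP.nodup_of_mem hl).sublist hxy.sublist
        simp only [List.nodup_cons, List.mem_cons] at hne
        have hx := hP.rel_of_infix hl (infix_pair_left hxy)
        have hy := hP.rel_of_infix hl (infix_pair_right hxy)
        exact ⟨x, hxy.subset (by simp), y, hxy.subset (by simp), by tauto,
          ⟨hx.1.symm, hx.2.2, hx.2.1⟩, hy.1⟩
    refine hnc (isCycleGraph_of_two_neighbors hc (S := {v | v ∈ l}) hal ?_ ?_)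
    · intro v hv
      obtain ⟨x, _, y, _, _, h, _⟩ := key v hv
      exact h.2.1
    · intro v hv
      obtain ⟨x, hx, y, hy, hxy, h, h'⟩ := key v hv
      exact ⟨x, hx, y, hy, hxy, h.1, h'⟩
  · obtain ⟨Q, hQ, hlt, -⟩ := hP.exists_merge (fun u v h => ⟨h.1.symm, h.2.2, h.2.1⟩) hl hl' hll
      hea heb ⟨hab, ha, hb⟩
    exact absurd (hmin hQ hlt.le) (not_le.2 hlt)

/-- If moreover every heavy vertex has three light neighbours, there is a path system using all
edges between light vertices and passing through every heavy vertex between two light ones. -/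
lemma exists_isPathSystem_heavy [Fintype V] {G : SimpleGraph V} (hc : G.Connected)
    (hnc : ¬ IsCycleGraph G)
    (hh : ∀ v, 2 < ndeg G v → 3 ≤ {w | G.Adj v w ∧ ndeg G w ≤ 2}.ncard) :
    ∃ P, IsPathSystem (fun u v => G.Adj u v ∧ (ndeg G u ≤ 2 ∨ ndeg G v ≤ 2)) P ∧
      (∀ u v, G.Adj u v → ndeg G u ≤ 2 → ndeg G v ≤ 2 → Consec P u v) ∧
      ∀ v, 2 < ndeg G v → ∃ l ∈ P, ∃ x y, [x, v, y] <:+: l := by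
  obtain ⟨P₀, hP₀, hL₀⟩ := exists_isPathSystem_light hc hnc
  obtain ⟨P, ⟨hP, hL⟩, hmin⟩ := exists_minimalFor_of_wellFoundedLT
    (fun P => IsPathSystem (fun u v => G.Adj u v ∧ (ndeg G u ≤ 2 ∨ ndeg G v ≤ 2)) P ∧
      ∀ u v, G.Adj u v → ndeg G u ≤ 2 → ndeg G v ≤ 2 → Consec P u v) List.length
    ⟨P₀, hP₀.mono fun u v h => ⟨h.1, Or.inl h.2.1⟩, hL₀⟩
  refine ⟨P, hP, hL, fun v hv => ?_⟩
  obtain ⟨l, hl, hvl⟩ := hP.exists_mem v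
  refine ⟨l, hl, exists_infix_of_not_isEnd hvl fun hend => ?_⟩
  have hmerge : ∀ w, G.Adj v w → ndeg G w ≤ 2 → ¬ Consec P v w → IsEnd l w := by
    intro w hvw hw hcon
    obtain ⟨l', hl', hwl'⟩ := hP.exists_mem w
    have hew := hP.isEnd_of_not_consec (fun _ _ h => h.1) hl' hwl' hw hvw.symm
      fun h => hcon h.symm
    by_cases hll : l = l'
    · exact hll ▸ hew
    obtain ⟨Q, hQ, hlt, hcQ⟩ := hP.exists_merge (fun u v h => ⟨h.1.symm, h.2.symm⟩) hl hl' hll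
      hend hew ⟨hvw, Or.inr hw⟩
    exact absurd (hmin ⟨hQ, fun u w h h₁ h₂ => hcQ _ _ (hL u w h h₁ h₂)⟩ hlt.le) (not_le.2 hlt)
  have huniq : ∀ x y, Consec P v x → Consec P v y → x = y := by
    rintro x y ⟨l₁, h₁, hx⟩ ⟨l₂, h₂, hy⟩
    obtain rfl : l₁ = l := hP.eq_of_mem h₁ hl (v := v)
      (by rcases hx with h | h <;> exact h.subset (by simp)) hvl
    obtain rfl : l₂ = l₁ := hP.eq_of_mem h₂ hl (v := v)
      (by rcases hy with h | h <;> exact h.subset (by simp)) hvl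
    exact hend.consec_unique (hP.nodup_of_mem hl) hx hy
  obtain ⟨a, ha, b, hb, c, hcc, hab, hac, hbc⟩ :=
    (Set.two_lt_ncard (Set.toFinite _)).1 (Nat.lt_of_succ_le (hh v hv))
  have pair : ∀ x y, G.Adj v x → G.Adj v y → ndeg G x ≤ 2 → ndeg G y ≤ 2 → x ≠ y →
      ¬ Consec P v x → ¬ Consec P v y → False := fun x y h₁ h₂ h₃ h₄ hxy h₅ h₆ =>
    hxy (hend.eq_or_eq (hmerge x h₁ h₃ h₅) (hmerge y h₂ h₄ h₆) h₁.ne h₂.ne)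
  have hpab := pair a b ha.1 hb.1 ha.2 hb.2 hab
  have hpac := pair a c ha.1 hcc.1 ha.2 hcc.2 hac
  have hpbc := pair b c hb.1 hcc.1 hb.2 hcc.2 hbc
  have huab := huniq a b
  have huac := huniq a c
  have hubc := huniq b c
  tauto

/-- The number of light vertices. -/
noncomputable def numLight (G : SimpleGraph V) : ℕ := {v | ndeg G v ≤ 2}.ncard

/-- The number of edges joining two light vertices. -/
noncomputable def numLightEdges (G : SimpleGraph V) : ℕ :=
  {e ∈ G.edgeSet | ∀ v ∈ e, ndeg G v ≤ 2}.ncard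

/-- Existence of a path system with few paths. -/
lemma exists_isPathSystem_length_le [Fintype V] {G : SimpleGraph V} (hc : G.Connected)
    (hnc : ¬ IsCycleGraph G)
    (hh : ∀ v, 2 < ndeg G v → 3 ≤ {w | G.Adj v w ∧ ndeg G w ≤ 2}.ncard) :
    ∃ P, IsPathSystem G.Adj P ∧
      P.length + Fintype.card V + numLightEdges G ≤ 2 * numLight G := by
  classical
  obtain ⟨P, hP, hL, hH⟩ := exists_isPathSystem_heavy hc hnc hh
  refine ⟨P, hP.mono fun _ _ h => h.1, ?_⟩
  let C : Finset (V × V) := Finset.univ.filter fun p => ∃ l ∈ P, [p.1, p.2] <:+: l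
  let Y : Finset V := Finset.univ.filter fun v => 2 < ndeg G v
  have hC := hP.card_pairs_add_length_le C fun p hp => (Finset.mem_filter.1 hp).2
  let C₀ := C.filter fun p => ndeg G p.1 ≤ 2 ∧ ndeg G p.2 ≤ 2
  let C₁ := C.filter fun p => 2 < ndeg G p.1
  let C₂ := C.filter fun p => 2 < ndeg G p.2
  have hrel : ∀ p ∈ C, G.Adj p.1 p.2 ∧ (ndeg G p.1 ≤ 2 ∨ ndeg G p.2 ≤ 2) := by
    intro p hp
    obtain ⟨l, hl, h⟩ := (Finset.mem_filter.1 hp).2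
    exact hP.rel_of_infix hl h
  have hsum : C₀.card + C₁.card + C₂.card ≤ C.card := by
    rw [← Finset.card_union_of_disjoint, ← Finset.card_union_of_disjoint]
    · apply Finset.card_le_card
      simp only [C₀, C₁, C₂, Finset.union_subset_iff, Finset.filter_subset, and_self]
    · rw [Finset.disjoint_left]
      intro p hp hp'
      simp only [C₀, C₁, C₂, Finset.mem_union, Finset.mem_filter] at hp hp'
      have := hrel p hp'.1
      omega
    · rw [Finset.disjoint_left]
      intro p hp hp'
      simp only [C₀, C₁, Finset.mem_filter] at hp hp'
      omega
  have hY₁ : Y.card ≤ C₁.card := by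
    refine (Finset.card_le_card fun v hv => ?_).trans (Finset.card_image_le (f := Prod.fst))
    have hv' := (Finset.mem_filter.1 hv).2
    obtain ⟨l, hl, x, y, h⟩ := hH v hv'
    exact Finset.mem_image.2 ⟨(v, y), by
      simp only [C₁, C, Finset.mem_filter, Finset.mem_univ, true_and]
      exact ⟨⟨l, hl, infix_pair_right h⟩, hv'⟩, rfl⟩
  have hY₂ : Y.card ≤ C₂.card := by
    refine (Finset.card_le_card fun v hv => ?_).trans (Finset.card_image_le (f := Prod.snd))
    have hv' := (Finset.mem_filter.1 hv).2
    obtain ⟨l, hl, x, y, h⟩ := hH v hv'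
    exact Finset.mem_image.2 ⟨(x, v), by
      simp only [C₂, C, Finset.mem_filter, Finset.mem_univ, true_and]
      exact ⟨⟨l, hl, infix_pair_left h⟩, hv'⟩, rfl⟩
  have hE : numLightEdges G ≤ C₀.card := by
    refine le_trans ?_ (Finset.card_image_le (f := fun p : V × V => s(p.1, p.2)))
    rw [numLightEdges, ← Set.ncard_coe_finset]
    refine Set.ncard_le_ncard ?_ (Finset.finite_toSet _)
    rintro e ⟨he, hle⟩
    induction e with
    | h a b =>
      have ha := hle a (Sym2.mem_mk_left a b)
      have hb := hle b (Sym2.mem_mk_right a b)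
      obtain ⟨l, hl, h⟩ := hL a b he ha hb
      rw [Finset.mem_coe, Finset.mem_image]
      simp only [C₀, C, Finset.mem_filter, Finset.mem_univ, true_and]
      rcases h with h | h
      · exact ⟨(a, b), ⟨⟨l, hl, h⟩, ha, hb⟩, rfl⟩
      · exact ⟨(b, a), ⟨⟨l, hl, h⟩, hb, ha⟩, Sym2.eq_swap⟩
  have hn : numLight G + Y.card = Fintype.card V := by
    have hlight : numLight G = (Finset.univ.filter fun v => ndeg G v ≤ 2).card := by
      rw [numLight, ← Set.ncard_coe_finset]
      simp
    have := Finset.card_filter_add_card_filter_not (s := (Finset.univ : Finset V))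
      (fun v => ndeg G v ≤ 2)
    simpa only [hlight, Y, not_le, Finset.card_univ] using this
  omega

/-- Counting the edges at light vertices of a graph without isolated vertices. -/
lemma numLeaves_add_numEdges_add [Fintype V] {G : SimpleGraph V} (hpos : ∀ v, 1 ≤ ndeg G v) :
    numLeaves G + numEdges G + numLightEdges G = numHeavyEdges G + 2 * numLight G := by
  classical
  let L : Finset V := Finset.univ.filter fun v => ndeg G v ≤ 2
  let D : Finset V := Finset.univ.filter fun v => ndeg G v = 1
  let H : Finset (Sym2 V) := G.edgeFinset.filter fun e => ∀ v ∈ e, 2 < ndeg G v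
  let E : Finset (Sym2 V) := G.edgeFinset.filter fun e => ∀ v ∈ e, ndeg G v ≤ 2
  have hL : numLight G = L.card := by
    rw [numLight, ← Set.ncard_coe_finset]; simp [L]
  have hD : numLeaves G = D.card := by
    rw [numLeaves, ← Set.ncard_coe_finset]; simp [D]
  have hH : numHeavyEdges G = H.card := by
    rw [numHeavyEdges, ← Set.ncard_coe_finset]; simp [H]
  have hE : numLightEdges G = E.card := by
    rw [numLightEdges, ← Set.ncard_coe_finset]; simp [E]
  have hM : numEdges G = G.edgeFinset.card := by
    rw [numEdges, ← Set.ncard_coe_finset]; simp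
  have hdeg : ∀ v, ndeg G v = (G.edgeFinset.filter fun e => v ∈ e).card := by
    intro v
    rw [← G.incidenceFinset_eq_filter, G.card_incidenceFinset_eq_degree, ndeg,
      Set.ncard_eq_toFinset_card', ← G.card_neighborFinset_eq_degree]
    rfl
  have hdc : ∑ v ∈ L, ndeg G v = ∑ e ∈ G.edgeFinset, (L.filter fun v => v ∈ e).card := by
    simp only [hdeg]
    exact Finset.sum_card_bipartiteAbove_eq_sum_card_bipartiteBelow fun v e => v ∈ e
  have h1 : ∑ v ∈ L, ndeg G v + D.card = 2 * L.card := by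
    have hDL : D.card = ∑ v ∈ L, if ndeg G v = 1 then 1 else 0 := by
      rw [← Finset.card_filter]
      congr 1
      ext v
      simp only [D, L, Finset.mem_filter, Finset.mem_univ, true_and]
      omega
    rw [hDL, ← Finset.sum_add_distrib, mul_comm, ← smul_eq_mul, ← Finset.sum_const]
    refine Finset.sum_congr rfl fun v hv => ?_
    have h2 : ndeg G v ≤ 2 := (Finset.mem_filter.1 hv).2
    have := hpos v
    split_ifs <;> omega
  have h2 : ∑ e ∈ G.edgeFinset, (L.filter fun v => v ∈ e).card + H.card
      = G.edgeFinset.card + E.card := by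
    rw [Finset.card_filter, Finset.card_filter, Finset.card_eq_sum_ones,
      ← Finset.sum_add_distrib, ← Finset.sum_add_distrib]
    refine Finset.sum_congr rfl fun e he => ?_
    induction e with
    | h a b =>
      have hab : a ≠ b := (SimpleGraph.mem_edgeFinset.1 he : G.Adj a b).ne
      have : (L.filter fun v => v ∈ s(a, b))
          = ({a, b} : Finset V).filter fun v => ndeg G v ≤ 2 := by
        ext v
        simp [L, and_comm]
      rw [this, Finset.filter_insert, Finset.filter_singleton]
      by_cases ha : ndeg G a ≤ 2 <;> by_cases hb : ndeg G b ≤ 2 <;>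
        simp [ha, hb, hab, not_le.1, not_lt.2, Sym2.mem_iff]
  omega

/-- Vertices with equal or consecutive labels are adjacent in `G`. -/
lemma IsL21Labeling.adj_of_compl {G : SimpleGraph V} {f : V → ℕ} (hf : IsL21Labeling Gᶜ f)
    {u v : V} (hne : u ≠ v) (h₁ : f u ≤ f v + 1) (h₂ : f v ≤ f u + 1) : G.Adj u v := by
  by_contra hadj
  have := hf.1 u v ((SimpleGraph.compl_adj _ _ _).2 ⟨hne, hadj⟩)
  simp only [Nat.dist] at this
  omega

/-- Two vertices with equal labels dominate `G`. -/
lemma IsL21Labeling.adj_or_adj_of_compl {G : SimpleGraph V} {f : V → ℕ}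
    (hf : IsL21Labeling Gᶜ f) {u v : V} (hne : u ≠ v) (huv : f u = f v) (w : V) :
    G.Adj u w ∨ G.Adj v w := by
  have hadj := hf.adj_of_compl hne (by omega) (by omega)
  by_contra! hw
  have hwu : u ≠ w := by rintro rfl; exact hw.2 hadj.symm
  have hwv : v ≠ w := by rintro rfl; exact hw.1 hadj
  have hed : Gᶜ.edist u v = 2 := by
    rw [SimpleGraph.edist_eq_two_iff]
    refine ⟨hne, fun h => ((SimpleGraph.compl_adj _ _ _).1 h).2 hadj, w, ?_⟩
    rw [SimpleGraph.mem_commonNeighbors, SimpleGraph.compl_adj, SimpleGraph.compl_adj]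
    exact ⟨⟨hwu, hw.1⟩, hwv, hw.2⟩
  have := hf.2 u v (by rw [SimpleGraph.dist, hed]; rfl)
  simp [huv] at this

/-- The span of a labeling of `Gᶜ` separating the light vertices of `G` is large. -/
lemma IsL21Labeling.two_mul_numLight_le [Fintype V] [Nonempty V] {G : SimpleGraph V} {f : V → ℕ}
    (hf : IsL21Labeling Gᶜ f)
    (hinj : ∀ u v, ndeg G u ≤ 2 → ndeg G v ≤ 2 → f u = f v → u = v)
    {k : ℕ} (hk : ∀ v, f v ≤ k) : 2 * numLight G ≤ k + 2 + numLightEdges G := by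
  classical
  let L : Finset V := Finset.univ.filter fun v => ndeg G v ≤ 2
  have hL : numLight G = L.card := by
    rw [numLight, ← Set.ncard_coe_finset]; simp [L]
  have hmemL : ∀ {v}, v ∈ L → ndeg G v ≤ 2 := fun hv => (Finset.mem_filter.1 hv).2
  let U := L.image f
  let U' := L.image fun v => f v + 1
  have hU : U.card = L.card := Finset.card_image_of_injOn fun u hu v hv h =>
    hinj u v (hmemL hu) (hmemL hv) h
  have hU' : U'.card = L.card := Finset.card_image_of_injOn fun u hu v hv h =>
    hinj u v (hmemL hu) (hmemL hv) (Nat.succ_injective h)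
  have hun : (U ∪ U').card ≤ k + 2 := by
    rw [← Finset.card_range (k + 2)]
    apply Finset.card_le_card
    intro i hi
    rw [Finset.mem_range]
    rcases Finset.mem_union.1 hi with hi | hi
    · obtain ⟨v, -, rfl⟩ := Finset.mem_image.1 hi
      have := hk v; omega
    · obtain ⟨v, -, rfl⟩ := Finset.mem_image.1 hi
      have := hk v; omega
  have hpre : ∀ i ∈ U ∩ U', ∃ p : V × V, ndeg G p.1 ≤ 2 ∧ ndeg G p.2 ≤ 2 ∧ f p.1 + 1 = i ∧
      f p.2 = i := by
    intro i hi
    obtain ⟨h₁, h₂⟩ := Finset.mem_inter.1 hi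
    obtain ⟨v, hv, hvi⟩ := Finset.mem_image.1 h₁
    obtain ⟨u, hu, hui⟩ := Finset.mem_image.1 h₂
    exact ⟨(u, v), hmemL hu, hmemL hv, hui, hvi⟩
  choose! g hg using hpre
  have hinter : (U ∩ U').card ≤ numLightEdges G := by
    rw [numLightEdges, ← Set.ncard_coe_finset]
    refine Set.ncard_le_ncard_of_injOn (fun i => s((g i).1, (g i).2)) ?_ ?_ (Set.toFinite _)
    · intro i hi
      obtain ⟨h₁, h₂, h₃, h₄⟩ := hg i hi
      refine ⟨?_, ?_⟩
      · have hne : (g i).1 ≠ (g i).2 := by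
          intro h
          rw [h] at h₃
          omega
        have hadj : G.Adj (g i).1 (g i).2 := hf.adj_of_compl hne (by omega) (by omega)
        exact hadj
      · intro v hv
        rcases Sym2.mem_iff.1 hv with rfl | rfl
        · exact h₁
        · exact h₂
    · intro i hi j hj hij
      obtain ⟨-, -, h₃, h₄⟩ := hg i hi
      obtain ⟨-, -, h₃', h₄'⟩ := hg j hj
      rcases Sym2.eq_iff.1 hij with ⟨h, h'⟩ | ⟨h, h'⟩
      · rw [← h₄, ← h₄', h']
      · rw [h] at h₃
        rw [h'] at h₄
        omega
  have := Finset.card_union_add_card_inter U U'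
  omega

/-- If `G` has many leaves and edges, labelings of `Gᶜ` separate the light vertices of `G`. -/
lemma IsL21Labeling.injOn_light [Fintype V] {G : SimpleGraph V}
    (hpos : ∀ v, 1 ≤ ndeg G v)
    (hge : numHeavyEdges G + Fintype.card V + 2 ≤ numLeaves G + numEdges G)
    {f : V → ℕ} (hf : IsL21Labeling Gᶜ f) {u v : V} (hu : ndeg G u ≤ 2) (hv : ndeg G v ≤ 2)
    (huv : f u = f v) : u = v := by
  classical
  by_contra hne
  have hdom := hf.adj_or_adj_of_compl hne huv
  have huniv : G.neighborSet u ∪ G.neighborSet v = Set.univ :=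
    Set.eq_univ_of_forall fun w => hdom w
  have hcard : Fintype.card V + (G.neighborSet u ∩ G.neighborSet v).ncard
      = ndeg G u + ndeg G v := by
    rw [← Nat.card_eq_fintype_card, ← Set.ncard_univ, ← huniv]
    exact Set.ncard_union_add_ncard_inter _ _
  have hlight : ∀ w, ndeg G w ≤ 2 := by
    intro w
    by_contra! hw
    have hins : (insert w (G.neighborSet w)).ncard = ndeg G w + 1 :=
      Set.ncard_insert_of_notMem (by simp)
    have hle : (insert w (G.neighborSet w)).ncard ≤ Fintype.card V := by
      rw [← Nat.card_eq_fintype_card, ← Set.ncard_univ]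
      exact Set.ncard_le_ncard (Set.subset_univ _)
    have hall : insert w (G.neighborSet w) = Set.univ := by
      refine Set.eq_of_subset_of_ncard_le (Set.subset_univ _) ?_ (Set.toFinite _)
      rw [Set.ncard_univ, Nat.card_eq_fintype_card]
      omega
    have hadj : ∀ x, ndeg G x ≤ 2 → G.Adj x w := by
      intro x hx
      have : x ∈ insert w (G.neighborSet w) := hall ▸ Set.mem_univ x
      rcases this with rfl | h
      · omega
      · exact SimpleGraph.Adj.symm h
    have : 0 < (G.neighborSet u ∩ G.neighborSet v).ncard :=
      (Set.ncard_pos (Set.toFinite _)).2 ⟨w, hadj u hu, hadj v hv⟩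
    omega
  have hL : numLight G = Fintype.card V := by
    have : {w | ndeg G w ≤ 2} = Set.univ := Set.eq_univ_of_forall hlight
    rw [numLight, this, Set.ncard_univ, Nat.card_eq_fintype_card]
  have hE : numLightEdges G = numEdges G := by
    rw [numLightEdges, numEdges]
    congr 1
    ext e
    simp [hlight]
  have hcount := numLeaves_add_numEdges_add hpos
  have hleaf : numLeaves G ≤ Fintype.card V := by
    rw [← Nat.card_eq_fintype_card, ← Set.ncard_univ]
    exact Set.ncard_le_ncard (Set.subset_univ _)
  have hsub : {w | ndeg G w = 1} ⊆ {u, v}ᶜ := by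
    rintro w hw (rfl | rfl) <;> simp only [Set.mem_ofPred_eq] at hw <;> omega
  have hle2 : numLeaves G ≤ _ := Set.ncard_le_ncard hsub
  have hcompl := Set.ncard_add_ncard_compl ({u, v} : Set V)
  rw [Set.ncard_pair hne, Nat.card_eq_fintype_card] at hcompl
  omega

/-- The number of holes of a labeling attaining both ends of its range. -/
lemma ncard_labHoles_add [Fintype V] {G : SimpleGraph V} {f : V → ℕ} (hle : ∀ v, f v ≤ lambdaNum G)
    (h0 : ∃ v, f v = 0) (h1 : ∃ v, f v = lambdaNum G) :
    (labHoles G f).ncard + (Set.range f).ncard = lambdaNum G + 1 := by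
  classical
  have hU : labHoles G f ∪ Set.range f = Set.Iic (lambdaNum G) := by
    ext i
    simp only [labHoles, Set.mem_union, Set.mem_ofPred_eq, Set.mem_range, Set.mem_Iic]
    constructor
    · rintro (h | ⟨v, rfl⟩)
      · omega
      · exact hle v
    · intro hi
      by_cases hv : ∃ v, f v = i
      · exact Or.inr hv
      · push Not at hv
        obtain ⟨a, ha⟩ := h0
        obtain ⟨b, hb⟩ := h1
        have ha' := hv a
        have hb' := hv b
        exact Or.inl ⟨by omega, by omega, hv⟩
  have hd : Disjoint (labHoles G f) (Set.range f) := by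
    rw [Set.disjoint_left]
    rintro i hi ⟨v, rfl⟩
    exact hi.2.2 v rfl
  have hfin : (labHoles G f ∪ Set.range f).Finite := hU ▸ Set.finite_Iic _
  rw [← Set.ncard_union_eq hd (hfin.subset Set.subset_union_left)
    (hfin.subset Set.subset_union_right), hU]
  simp [Set.ncard_eq_toFinset_card']

/-- **Corollary (Statement 6).** Let `G` be a connected non-cycle graph with `m ≥ 1`
edges, `n` vertices, `h` heavy edges and `ℓ` leaves, in which every heavy vertex is
adjacent to at least three light vertices.  If moreover `ℓ + m ≥ h + n + 2`, then
`λ(Gᶜ) = ℓ + m − h − 2` and `ρ(Gᶜ) = ℓ + m − h − n − 1`. -/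
theorem complement_lambda_hole_general {V : Type*} [Fintype V] (G : SimpleGraph V)
    (hc : G.Connected) (hnc : ¬ IsCycleGraph G) (hm : 1 ≤ numEdges G)
    (hh : ∀ v, 2 < ndeg G v → 3 ≤ {w | G.Adj v w ∧ ndeg G w ≤ 2}.ncard)
    (hge : numHeavyEdges G + Fintype.card V + 2 ≤ numLeaves G + numEdges G) :
    (lambdaNum Gᶜ : ℤ) = numLeaves G + numEdges G - numHeavyEdges G - 2 ∧
    (holeIndex Gᶜ : ℤ) =
      numLeaves G + numEdges G - numHeavyEdges G - Fintype.card V - 1 := by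
  classical
  have hnt : Nontrivial V := by
    obtain ⟨e, he⟩ := (Set.ncard_pos (Set.toFinite G.edgeSet)).1 hm
    induction e with
    | h a b => exact ⟨a, b, SimpleGraph.Adj.ne he⟩
  have hcard := Fintype.one_lt_card (α := V)
  have hpos : ∀ v, 1 ≤ ndeg G v := fun v =>
    (Set.ncard_pos (Set.toFinite _)).2 (hc.preconnected.exists_adj_of_nontrivial v)
  have hcount := numLeaves_add_numEdges_add hpos
  obtain ⟨K, hK⟩ : ∃ K, numLeaves G + numEdges G = numHeavyEdges G + K + 2 :=
    ⟨numLeaves G + numEdges G - numHeavyEdges G - 2, by omega⟩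
  have hlower : ∀ f, IsL21Labeling Gᶜ f → ∀ k, (∀ v, f v ≤ k) → K ≤ k := by
    intro f hf k hk
    have := hf.two_mul_numLight_le (fun u v hu hv => hf.injOn_light hpos hge hu hv) hk
    omega
  obtain ⟨P, hP, hlen⟩ := exists_isPathSystem_length_le hc hnc hh
  obtain ⟨f, hinj, hle, hadj⟩ := exists_label_of_chains P hP.ne_nil hP.chain hP.nodup
  have hflat : P.flatten.length ≤ Fintype.card V := hP.nodup.length_le_card
  have hfK : ∀ v, f v ≤ K := by
    intro v
    have := hle v (hP.cover v)
    omega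
  have hfinj : Function.Injective f := fun u v h => hinj u (hP.cover u) v (hP.cover v) h
  have hf : IsL21Labeling Gᶜ f := by
    constructor
    · intro u v huv
      obtain ⟨hne, hnadj⟩ := (SimpleGraph.compl_adj _ _ _).1 huv
      have h₁ := hfinj.ne hne
      have h₂ : f u + 1 ≠ f v := fun h => hnadj (hadj u (hP.cover u) v (hP.cover v) h)
      have h₃ : f v + 1 ≠ f u := fun h => hnadj (hadj v (hP.cover v) u (hP.cover u) h).symm
      simp only [Nat.dist]
      omega
    · intro u v huv
      have hne : u ≠ v := by
        rintro rfl
        simp at huv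
      have := hfinj.ne hne
      simp only [Nat.dist]
      omega
  have hlam : lambdaNum Gᶜ = K := by
    apply le_antisymm
    · exact Nat.sInf_le ⟨f, hf, hfK⟩
    · exact le_csInf ⟨K, f, hf, hfK⟩ fun k ⟨g, hg, hgk⟩ => hlower g hg k hgk
  have hmax : ∀ g, IsL21Labeling Gᶜ g → (∀ v, g v ≤ K) → ∃ v, g v = K := by
    intro g hg hgK
    by_contra! hne
    have := hlower g hg (K - 1) fun v => by
      have := hgK v
      have := hne v
      omega
    omega
  have hmin : ∀ g, IsL21Labeling Gᶜ g → (∀ v, g v ≤ K) → ∃ v, g v = 0 := by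
    intro g hg hgK
    by_contra! hne
    have hg' : IsL21Labeling Gᶜ fun v => g v - 1 := by
      constructor
      · intro u v huv
        have h₁ := hg.1 u v huv
        have h₂ := hne u
        have h₃ := hne v
        simp only [Nat.dist] at h₁ ⊢
        omega
      · intro u v huv
        have h₁ := hg.2 u v huv
        have h₂ := hne u
        have h₃ := hne v
        simp only [Nat.dist] at h₁ ⊢
        omega
    have := hlower _ hg' (K - 1) fun v => by
      have := hgK v
      omega
    omega
  have hhole : ∀ g, IsL21Labeling Gᶜ g → (∀ v, g v ≤ K) →
      (labHoles Gᶜ g).ncard + (Set.range g).ncard = K + 1 := by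
    intro g hg hgK
    rw [← hlam]
    exact ncard_labHoles_add (by rwa [hlam]) (hmin g hg hgK) (by rw [hlam]; exact hmax g hg hgK)
  have hrange : ∀ g : V → ℕ, (Set.range g).ncard ≤ Fintype.card V := by
    intro g
    rw [← Set.image_univ, ← Nat.card_eq_fintype_card, ← Set.ncard_univ]
    exact Set.ncard_image_le
  have hrangef : (Set.range f).ncard = Fintype.card V := by
    rw [← Set.image_univ, Set.ncard_image_of_injective _ hfinj, Set.ncard_univ,
      Nat.card_eq_fintype_card]
  have hlamf : IsLambdaLabeling Gᶜ f :=
    ⟨hf, by rwa [hlam], by rw [hlam]; exact hmax f hf hfK⟩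
  have hrho : holeIndex Gᶜ + Fintype.card V = K + 1 := by
    have hf_eq := hhole f hf hfK
    rw [hrangef] at hf_eq
    have h₁ : holeIndex Gᶜ ≤ (labHoles Gᶜ f).ncard := Nat.sInf_le ⟨f, hlamf, rfl⟩
    have h₂ : (labHoles Gᶜ f).ncard ≤ holeIndex Gᶜ := by
      refine le_csInf ⟨_, f, hlamf, rfl⟩ ?_
      rintro _ ⟨g, hg, rfl⟩
      have h₃ := hhole g hg.1 (by simpa only [hlam] using hg.2.1)
      have h₄ := hrange g
      omega
    omega
  rw [hlam]
  omega

end PaperPC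
end

section
/- Let T be a 2-sparse tree with ℓ ≥ 2 leaves, and let G be any graph obtained from T by expanding each edge of T into a complete graph of arbitrary order (i.e., replacing each edge uv of T by a complete graph containing u and v). Then P(G) = ℓ − 1. -/
namespace PaperPC

open SimpleGraph

variable {V : Type*}

section Counting

variable (G : SimpleGraph V)

lemma ndeg_eq_degree (v : V) [Fintype (G.neighborSet v)] : ndeg G v = G.degree v := by
  rw [ndeg, Set.ncard_eq_toFinset_card']
  rfl

lemma ncard_edgeSet_eq_card_edgeFinset [Fintype G.edgeSet] :
    G.edgeSet.ncard = G.edgeFinset.card := by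
  rw [Set.ncard_eq_toFinset_card']
  rfl

lemma reachable_deleteEdges_singleton_or {u v a b : V} (h : G.Reachable a b) :
    (G.deleteEdges {s(u, v)}).Reachable a b ∨
      (((G.deleteEdges {s(u, v)}).Reachable a u ∨ (G.deleteEdges {s(u, v)}).Reachable a v) ∧
        ((G.deleteEdges {s(u, v)}).Reachable b u ∨
          (G.deleteEdges {s(u, v)}).Reachable b v)) := by
  obtain ⟨p⟩ := h
  induction p with
  | nil => exact .inl .rfl
  | @cons a c b hac p ih =>
    by_cases he : s(a, c) = s(u, v)
    · rcases Sym2.eq_iff.1 he with ⟨rfl, rfl⟩ | ⟨rfl, rfl⟩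
      · refine .inr ⟨.inl .rfl, ?_⟩
        rcases ih with h | h
        · exact .inr h.symm
        · exact h.2
      · refine .inr ⟨.inr .rfl, ?_⟩
        rcases ih with h | h
        · exact .inl h.symm
        · exact h.2
    · have hac' : (G.deleteEdges {s(u, v)}).Reachable a c :=
        SimpleGraph.Adj.reachable (by simp [deleteEdges_adj, hac, he])
      rcases ih with h | ⟨h₁, h₂⟩
      · exact .inl (hac'.trans h)
      · exact .inr ⟨h₁.imp hac'.trans hac'.trans, h₂⟩

lemma card_connectedComponent_deleteEdges_singleton_le [Finite V] (e : Sym2 V) :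
    Nat.card (G.deleteEdges {e}).ConnectedComponent ≤ Nat.card G.ConnectedComponent + 1 := by
  classical
  induction e with | _ u v
  set G' := G.deleteEdges {s(u, v)} with hG'
  have hle : G' ≤ G := deleteEdges_le _
  let f : G'.ConnectedComponent → Option G.ConnectedComponent := fun C ↦
    if C = G'.connectedComponentMk u then none else some (C.map (Hom.ofLE hle))
  have hf : Function.Injective f := by
    intro C D h
    induction C using ConnectedComponent.ind with | _ a
    induction D using ConnectedComponent.ind with | _ b
    simp only [f] at h
    split_ifs at h with ha hb hb
    · rw [ha, hb]
    · simp only [ConnectedComponent.map_mk, Hom.coe_ofLE, id_eq, Option.some.injEq,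
        ConnectedComponent.eq] at h
      rw [ConnectedComponent.eq] at ha hb ⊢
      rcases reachable_deleteEdges_singleton_or G (u := u) (v := v) h with h | ⟨h₁, h₂⟩
      · exact h
      · exact (h₁.resolve_left ha).trans (h₂.resolve_left hb).symm
  calc _ ≤ Nat.card (Option G.ConnectedComponent) := Nat.card_le_card_of_injective f hf
    _ = _ := Finite.card_option

lemma card_connectedComponent_deleteEdges_le [Finite V] (S : Finset (Sym2 V)) :
    Nat.card (G.deleteEdges (S : Set (Sym2 V))).ConnectedComponent ≤
      Nat.card G.ConnectedComponent + S.card := by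
  classical
  induction S using Finset.induction_on with
  | empty => simp
  | insert e S he ih =>
    have h : G.deleteEdges ((insert e S : Finset (Sym2 V)) : Set (Sym2 V)) =
        (G.deleteEdges (S : Set (Sym2 V))).deleteEdges {e} := by
      rw [deleteEdges_deleteEdges]
      congr 1
      ext x
      simp
    rw [h, Finset.card_insert_of_notMem he]
    have := card_connectedComponent_deleteEdges_singleton_le (G.deleteEdges (S : Set (Sym2 V))) e
    omega

lemma card_le_numPaths_add_ncard_edgeSet [Finite V] :
    Nat.card V ≤ numPaths G + G.edgeSet.ncard := by
  classical
  have := Fintype.ofFinite V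
  have h := card_connectedComponent_deleteEdges_le G G.edgeFinset
  rw [coe_edgeFinset, ← ncard_edgeSet_eq_card_edgeFinset] at h
  refine le_trans (Nat.card_le_card_of_injective
    (G.deleteEdges G.edgeSet).connectedComponentMk ?_) h
  intro a b hab
  have hbot : G.deleteEdges G.edgeSet = ⊥ := by
    ext a b
    simp
  rw [ConnectedComponent.eq, hbot, reachable_bot] at hab
  exact hab

variable {G}

lemma sum_ndeg_sub_two_add_two [Fintype V] [Nontrivial V] (hG : G.IsTree) :
    ∑ v, (ndeg G v - 2) + 2 = numLeaves G := by
  classical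
  have h₁ := G.sum_degrees_eq_twice_card_edges
  have h₂ := hG.card_edgeFinset
  have h₃ : numLeaves G = ∑ v, if G.degree v = 1 then 1 else 0 := by
    rw [numLeaves, Set.ncard_eq_toFinset_card', ← Finset.card_filter]
    congr 1
    ext v
    simp [ndeg_eq_degree]
  have h₄ : ∑ v, (ndeg G v - 2) + 2 * Fintype.card V =
      ∑ v, G.degree v + ∑ v, if G.degree v = 1 then 1 else 0 := by
    rw [← Finset.card_univ, mul_comm, ← smul_eq_mul, ← Finset.sum_const,
      ← Finset.sum_add_distrib, ← Finset.sum_add_distrib]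
    refine Finset.sum_congr rfl fun v _ ↦ ?_
    have := hG.connected.preconnected.degree_pos_of_nontrivial v
    rw [ndeg_eq_degree]
    split_ifs <;> omega
  omega

lemma exists_isLinearForest_le_of_isTree [Finite V] [Nontrivial V] (hG : G.IsTree) :
    ∃ H ≤ G, IsLinearForest H ∧ numPaths H + 1 ≤ numLeaves G := by
  classical
  have := Fintype.ofFinite V
  have hS : ∀ v, ∃ S ⊆ G.incidenceFinset v, S.card = ndeg G v - 2 := fun v ↦
    Finset.exists_subset_card_eq (by
      rw [card_incidenceFinset_eq_degree, ndeg_eq_degree]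
      omega)
  choose S hS hcard using hS
  let A : Finset (Sym2 V) := Finset.univ.biUnion S
  refine ⟨G.deleteEdges A, deleteEdges_le _, ⟨hG.isAcyclic.anti (deleteEdges_le _), fun v ↦ ?_⟩, ?_⟩
  · have hsub : (G.deleteEdges A).incidenceFinset v ⊆ G.incidenceFinset v \ S v := by
      intro e he
      rw [mem_incidenceFinset, incidenceSet, Set.mem_sep_iff, edgeSet_deleteEdges] at he
      rw [Finset.mem_sdiff, mem_incidenceFinset]
      exact ⟨⟨he.1.1, he.2⟩, fun h ↦ he.1.2 (by simpa [A] using ⟨v, h⟩)⟩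
    have := Finset.card_le_card hsub
    rw [Finset.card_sdiff_of_subset (hS v), hcard, card_incidenceFinset_eq_degree,
      card_incidenceFinset_eq_degree, ndeg_eq_degree] at this
    rw [ndeg_eq_degree]
    omega
  · have h₁ := card_connectedComponent_deleteEdges_le G A
    have h₂ : A.card ≤ ∑ v, (ndeg G v - 2) := by
      refine Finset.card_biUnion_le.trans (le_of_eq ?_)
      exact Finset.sum_congr rfl fun v _ ↦ hcard v
    have h₃ := sum_ndeg_sub_two_add_two hG
    have h₄ : Nat.card G.ConnectedComponent ≤ 1 :=
      Finite.card_le_one_iff_subsingleton.2 hG.connected.preconnected.subsingleton_connectedComponent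
    unfold numPaths
    omega

lemma ncard_edges_within_add_one_le [Finite V] (hG : G.IsAcyclic) {s : Set V} (hs : s.Nonempty) :
    {e ∈ G.edgeSet | ∀ x ∈ e, x ∈ s}.ncard + 1 ≤ s.ncard := by
  classical
  have := Fintype.ofFinite V
  have := hs.to_subtype
  obtain ⟨K, hK, -, hT⟩ := (connected_top (V := s)).exists_isTree_le_of_le_of_isAcyclic le_top
    (hG.induce s)
  have h := hT.card_edgeFinset
  rw [← ncard_edgeSet_eq_card_edgeFinset, ← Nat.card_eq_fintype_card, Nat.card_coe_set_eq] at h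
  rw [← h]
  refine Nat.add_le_add_right ?_ 1
  have hsub : {e ∈ G.edgeSet | ∀ x ∈ e, x ∈ s} ⊆ Sym2.map Subtype.val '' K.edgeSet := by
    rintro e ⟨he, hes⟩
    induction e with | _ x y
    exact ⟨s(⟨x, hes x (by simp)⟩, ⟨y, hes y (by simp)⟩), hK (by simpa using he), rfl⟩
  exact (Set.ncard_le_ncard hsub).trans (Set.ncard_image_le)

end Counting

section Parent

variable {next : V → V} {rank : V → ℕ} {r : V}

/-- The graph joining every vertex other than `r` to its image under `next`. -/
def parentGraph (next : V → V) (r : V) : SimpleGraph V :=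
  fromRel fun x y ↦ x ≠ r ∧ next x = y

lemma parentGraph_adj_next (h : ∀ x, x ≠ r → rank (next x) < rank x) {x : V} (hx : x ≠ r) :
    (parentGraph next r).Adj x (next x) := by
  rw [parentGraph, fromRel_adj]
  exact ⟨fun e ↦ absurd (h x hx) (by rw [← e]; exact lt_irrefl _), .inl ⟨hx, rfl⟩⟩

lemma parentGraph_reachable (h : ∀ x, x ≠ r → rank (next x) < rank x) (x : V) :
    (parentGraph next r).Reachable x r := by
  induction hn : rank x using Nat.strong_induction_on generalizing x with
  | _ n ih =>
    by_cases hx : x = r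
    · rw [hx]
    · exact (parentGraph_adj_next h hx).reachable.trans (ih _ (hn ▸ h x hx) _ rfl)

lemma parentGraph_isTree [Finite V] (h : ∀ x, x ≠ r → rank (next x) < rank x) :
    (parentGraph next r).IsTree := by
  have hconn : (parentGraph next r).Connected :=
    { preconnected := fun x y ↦ (parentGraph_reachable h x).trans (parentGraph_reachable h y).symm
      nonempty := ⟨r⟩ }
  refine isTree_iff_connected_and_card.2 ⟨hconn,
    le_antisymm ?_ hconn.card_vert_le_card_edgeSet_add_one⟩
  have hsub : (parentGraph next r).edgeSet ⊆ (fun x ↦ s(x, next x)) '' {r}ᶜ := by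
    intro e he
    induction e with | _ x y
    rw [mem_edgeSet, parentGraph, fromRel_adj] at he
    rcases he.2 with ⟨hx, rfl⟩ | ⟨hy, rfl⟩
    · exact ⟨x, hx, rfl⟩
    · exact ⟨y, hy, Sym2.eq_swap⟩
  have h₁ := (Set.ncard_le_ncard hsub).trans Set.ncard_image_le
  have h₂ := Set.ncard_add_ncard_compl {r}
  rw [Set.ncard_singleton] at h₂
  rw [Nat.card_coe_set_eq]
  omega

lemma two_le_ndeg_parentGraph [Finite V] (h : ∀ x, x ≠ r → rank (next x) < rank x) {x y : V}
    (hx : x ≠ r) (hy : y ≠ r) (hyx : next y = x) : 2 ≤ ndeg (parentGraph next r) x := by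
  have hadj := parentGraph_adj_next h hy
  rw [hyx] at hadj
  have hne : next x ≠ y := by
    rintro rfl
    have h₁ := h _ hx
    have h₂ := h _ hy
    rw [hyx] at h₂
    omega
  rw [ndeg, ← Set.ncard_pair hne]
  refine Set.ncard_le_ncard ?_
  rintro z (rfl | rfl)
  · exact parentGraph_adj_next h hx
  · exact hadj.symm

end Parent

lemma eq_of_adj_of_dist_eq {G : SimpleGraph V} (hG : G.IsTree) {r c p q : V}
    (hp : G.Adj c p) (hq : G.Adj c q) (hdp : G.dist r c = G.dist r p + 1)
    (hdq : G.dist r c = G.dist r q + 1) : p = q := by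
  have key : ∀ p, G.Adj c p → G.dist r c = G.dist r p + 1 →
      ∃ w : G.Walk r c, w.IsPath ∧ w.penultimate = p := by
    intro p hp hd
    obtain ⟨w, hw⟩ := hG.connected.exists_walk_length_eq_dist r p
    exact ⟨w.concat hp.symm, Walk.isPath_of_length_eq_dist _ (by simp [hw, hd]), by simp⟩
  obtain ⟨w, hw, rfl⟩ := key p hp hdp
  obtain ⟨w', hw', rfl⟩ := key q hq hdq
  have := hG.isAcyclic.subsingleton_path r c
  exact congrArg (fun p : G.Path r c ↦ p.1.penultimate)
    (Subsingleton.elim (⟨w, hw⟩ : G.Path r c) ⟨w', hw'⟩)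

section BlockExpansion

variable {U W : Type*} {T : SimpleGraph U} {G : SimpleGraph W}

lemma exists_spanning_tree_of_isBlockExpansion [Finite U] [Finite W] (hT : T.IsTree)
    {r : U} (hr : ndeg T r = 1) (hexp : IsBlockExpansion T G) :
    ∃ K ≤ G, K.IsTree ∧ numLeaves K ≤ numLeaves T := by
  classical
  obtain ⟨ι, b, hι, hint, hcov, hadj⟩ := hexp
  have hr0 : T.dist r r = 0 := dist_self
  generalize hd : T.dist r = d at hr0
  have huniq : ∀ {c p q}, T.Adj c p → T.Adj c q → d c = d p + 1 → d c = d q + 1 → p = q := by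
    subst hd
    exact eq_of_adj_of_dist_eq hT
  have hstep : ∀ {x y}, T.Adj x y → d x = d y + 1 ∨ d y = d x + 1 := by
    subst hd
    exact hT.dist_eq_dist_add_one_of_adj r
  have hmem : ∀ {u x y}, T.Adj x y → (ι u ∈ b s(x, y) ↔ u = x ∨ u = y) := by
    intro u x y h
    rw [hι u s(x, y) h, Sym2.mem_iff]
  -- `w` is a non-root vertex of the block of the tree edge from `c` up to `p`
  let Up : W → U → U → Prop := fun w c p ↦
    T.Adj c p ∧ d c = d p + 1 ∧ w ∈ b s(c, p) ∧ w ≠ ι p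
  have hup_unique : ∀ {w c p c' p'}, Up w c p → Up w c' p' → c = c' ∧ p = p' := by
    rintro w c p c' p' ⟨h₁, h₂, h₃, h₄⟩ ⟨h₁', h₂', h₃', h₄'⟩
    by_cases he : s(c, p) = s(c', p')
    · rcases Sym2.eq_iff.1 he with h | ⟨rfl, rfl⟩
      · exact h
      · omega
    · obtain ⟨u, rfl⟩ := hint _ h₁ _ h₁' he ⟨h₃, h₃'⟩
      have hc : u = c := ((hmem h₁).1 h₃).resolve_right fun h ↦ h₄ (h ▸ rfl)
      have hc' : u = c' := ((hmem h₁').1 h₃').resolve_right fun h ↦ h₄' (h ▸ rfl)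
      subst hc hc'
      exact ⟨rfl, huniq h₁ h₁' h₂ h₂'⟩
  have hup_ne : ∀ {w c p}, Up w c p → w ≠ ι r := by
    rintro w c p ⟨h₁, h₂, h₃, h₄⟩ rfl
    rcases (hmem h₁).1 h₃ with rfl | rfl
    · omega
    · exact h₄ rfl
  have hparent : ∀ u, u ≠ r → ∃ p, T.Adj u p ∧ d u = d p + 1 := by
    intro u hu
    subst hd
    obtain ⟨w, hw⟩ := hT.connected.exists_walk_length_eq_dist u r
    cases w with
    | nil => exact absurd rfl hu
    | @cons _ v _ h p =>
      refine ⟨v, h, ?_⟩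
      have h₁ := dist_le p
      rw [Walk.length_cons] at hw
      rw [dist_comm (u := u)] at hw
      rw [dist_comm (u := v)] at h₁
      rcases hT.dist_eq_dist_add_one_of_adj r h with h | h <;> omega
  have hup : ∀ w, w ≠ ι r → ∃ q : U × U, Up w q.1 q.2 := by
    intro w hw
    by_cases hwr : w ∈ Set.range ι
    · obtain ⟨u, rfl⟩ := hwr
      obtain ⟨p, hp, hdp⟩ := hparent u fun h ↦ hw (h ▸ rfl)
      exact ⟨(u, p), hp, hdp, (hmem hp).2 (.inl rfl), fun h ↦ hp.ne (ι.injective h)⟩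
    · obtain ⟨e, he, hwe⟩ := hcov w
      induction e with | _ x y
      rcases hstep he with h | h
      · exact ⟨(x, y), he, h, hwe, fun h ↦ hwr ⟨_, h.symm⟩⟩
      · exact ⟨(y, x), he.symm, h, Sym2.eq_swap ▸ hwe, fun h ↦ hwr ⟨_, h.symm⟩⟩
  have hnb : ∀ u, u ≠ r → ndeg T u ≠ 1 → ∃ c, T.Adj c u ∧ d c = d u + 1 := by
    intro u hu hdeg
    obtain ⟨p, hp, hdp⟩ := hparent u hu
    by_contra! hcon
    refine hdeg (Set.ncard_eq_one.2 ⟨p, ?_⟩)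
    ext x
    simp only [mem_neighborSet, Set.mem_singleton_iff]
    refine ⟨fun hx ↦ ?_, fun h ↦ h ▸ hp⟩
    exact huniq hx hp ((hstep hx).resolve_right (hcon x hx.symm)) hdp
  have : Nonempty (U × U) := ⟨(r, r)⟩
  have : Nonempty W := ⟨ι r⟩
  choose! q hq using hup
  obtain ⟨N, ⟨idx⟩⟩ := Finite.exists_equiv_fin W
  let rank : W → ℕ := fun w ↦ if w = ι r then 0 else
    if w = ι (q w).1 then (N + 1) * d (q w).1 else (N + 1) * d (q w).2 + idx w + 1
  have hq_eq : ∀ {w c p}, Up w c p → q w = (c, p) := fun h ↦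
    Prod.ext_iff.2 (hup_unique (hq _ (hup_ne h)) h)
  have hrank_ι : ∀ u, rank (ι u) = (N + 1) * d u := by
    intro u
    by_cases hu : u = r
    · subst hu
      simp [rank, hr0]
    · obtain ⟨p, hp, hdp⟩ := hparent u hu
      have : Up (ι u) u p := ⟨hp, hdp, (hmem hp).2 (.inl rfl), fun h ↦ hp.ne (ι.injective h)⟩
      simp [rank, hq_eq this, hu]
  have hrank_up : ∀ {w c p}, Up w c p →
      rank w = if w = ι c then (N + 1) * (d p + 1) else (N + 1) * d p + idx w + 1 := by
    intro w c p h
    simp only [rank, hq_eq h, if_neg (hup_ne h), h.2.1]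
  have hrank_lt : ∀ {w c p}, Up w c p → rank (ι p) < rank w := by
    intro w c p h
    rw [hrank_ι, hrank_up h]
    split_ifs <;> grind
  have hrank_le : ∀ {w c p}, Up w c p → rank w ≤ rank (ι c) := by
    intro w c p h
    rw [hrank_ι, hrank_up h, h.2.1]
    have := (idx w).2
    split_ifs <;> grind
  have hrank_inj : ∀ {w w' c p}, Up w c p → Up w' c p → rank w = rank w' → w = w' := by
    intro w w' c p h h' he
    rw [hrank_up h, hrank_up h'] at he
    have h₁ := (idx w).2
    have h₂ := (idx w').2
    rw [mul_add, mul_one] at he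
    split_ifs at he with h₃ h₄ h₄
    · rw [h₃, h₄]
    · omega
    · omega
    · exact idx.injective (Fin.ext (by omega))
  have hnext : ∀ w, w ≠ ι r → ∃ x, (x ∈ b s((q w).1, (q w).2) ∧ rank x < rank w) ∧
      ∀ y, y ∈ b s((q w).1, (q w).2) ∧ rank y < rank w → rank y ≤ rank x := by
    intro w hw
    obtain ⟨h₁, h₂, h₃, h₄⟩ := hq w hw
    exact Set.exists_max_image {x | x ∈ b s((q w).1, (q w).2) ∧ rank x < rank w} rank
      (Set.toFinite _) ⟨ι (q w).2, (hmem h₁).2 (.inr rfl), hrank_lt (hq w hw)⟩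
  choose! next hnext hmax using hnext
  have hdec : ∀ w, w ≠ ι r → rank (next w) < rank w := fun w hw ↦ (hnext w hw).2
  refine ⟨parentGraph next (ι r), ?_, parentGraph_isTree hdec, ?_⟩
  · have hG : ∀ w, w ≠ ι r → G.Adj w (next w) := by
      intro w hw
      refine (hadj _ _).2 ⟨fun h ↦ absurd (hdec w hw) (by rw [← h]; exact lt_irrefl _), ?_⟩
      exact ⟨_, (hq w hw).1, (hq w hw).2.2.1, (hnext w hw).1⟩
    intro x y h
    rw [parentGraph, fromRel_adj] at h
    rcases h.2 with ⟨hx, rfl⟩ | ⟨hy, rfl⟩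
    · exact hG x hx
    · exact (hG y hy).symm
  · have hpred : ∀ {y c p}, T.Adj c p → d c = d p + 1 → y ∈ b s(c, p) → y ≠ ι c →
        ∃ x, x ≠ ι r ∧ next x = y := by
      intro y c p hcp hdc hy hyc
      have hup_c : Up (ι c) c p :=
        ⟨hcp, hdc, (hmem hcp).2 (.inl rfl), fun h ↦ hcp.ne (ι.injective h)⟩
      have hlt : rank y < rank (ι c) := by
        by_cases hyp : y = ι p
        · exact hyp ▸ hrank_lt hup_c
        · have hupy : Up y c p := ⟨hcp, hdc, hy, hyp⟩
          exact lt_of_le_of_ne (hrank_le hupy) fun h ↦ hyc (hrank_inj hupy hup_c h)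
      obtain ⟨x, ⟨hxb, hyx⟩, hmin⟩ := Set.exists_min_image
        {x | x ∈ b s(c, p) ∧ rank y < rank x} rank (Set.toFinite _) ⟨ι c, hup_c.2.2.1, hlt⟩
      have hpy : rank (ι p) ≤ rank y := by
        by_cases hyp : y = ι p
        · rw [hyp]
        · exact (hrank_lt ⟨hcp, hdc, hy, hyp⟩).le
      have hupx : Up x c p := ⟨hcp, hdc, hxb, by rintro rfl; omega⟩
      have hxr := hup_ne hupx
      refine ⟨x, hxr, ?_⟩
      have h₁ := hnext x hxr
      have h₂ := hmax x hxr y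
      rw [hq_eq hupx] at h₁ h₂
      have h₃ := h₂ ⟨hy, hyx⟩
      have heq : rank (next x) = rank y := by
        refine le_antisymm (not_lt.1 fun h ↦ ?_) h₃
        exact absurd (hmin _ ⟨h₁.1, h⟩) (not_le.2 h₁.2)
      by_cases hyp : y = ι p
      · by_contra hne
        have : Up (next x) c p := ⟨hcp, hdc, h₁.1, hyp ▸ hne⟩
        have := hrank_lt this
        rw [heq, hyp] at this
        exact lt_irrefl _ this
      · have hupn : Up (next x) c p := by
          refine ⟨hcp, hdc, h₁.1, fun h ↦ ?_⟩
          have := hrank_lt (w := y) ⟨hcp, hdc, hy, hyp⟩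
          rw [← heq, h] at this
          exact lt_irrefl _ this
        exact hrank_inj hupn ⟨hcp, hdc, hy, hyp⟩ heq
    have hsub : {w | ndeg (parentGraph next (ι r)) w = 1} ⊆ ι '' {u | ndeg T u = 1} := by
      intro w hw
      by_contra hcon
      have hwr : w ≠ ι r := fun h ↦ hcon ⟨r, hr, h.symm⟩
      suffices ∃ x, x ≠ ι r ∧ next x = w by
        obtain ⟨x, hx, hxw⟩ := this
        have := two_le_ndeg_parentGraph hdec hwr hx hxw
        change ndeg _ w = 1 at hw
        omega
      by_cases hwι : w ∈ Set.range ι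
      · obtain ⟨u, rfl⟩ := hwι
        obtain ⟨c, hc, hdc⟩ := hnb u (fun h ↦ hwr (h ▸ rfl)) fun h ↦ hcon ⟨u, h, rfl⟩
        exact hpred hc hdc ((hmem hc).2 (.inr rfl)) fun h ↦ hc.ne (ι.injective h).symm
      · obtain ⟨h₁, h₂, h₃, h₄⟩ := hq w hwr
        exact hpred h₁ h₂ h₃ fun h ↦ hwι ⟨_, h.symm⟩
    exact (Set.ncard_le_ncard hsub).trans Set.ncard_image_le

lemma sum_ncard_block_add_one_le [Fintype U] [Finite W] [Fintype T.edgeSet] (hT : T.IsTree)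
    (ι : U ↪ W) (b : Sym2 U → Set W)
    (hι : ∀ u, ∀ e ∈ T.edgeSet, (ι u ∈ b e ↔ u ∈ e))
    (hint : ∀ e ∈ T.edgeSet, ∀ f ∈ T.edgeSet, e ≠ f → b e ∩ b f ⊆ Set.range ι) :
    ∑ e ∈ T.edgeFinset, (b e).ncard + 1 ≤ Nat.card W + T.edgeFinset.card := by
  classical
  have := Fintype.ofFinite W
  have hcard := hT.card_edgeFinset
  have h₁ : ∀ e ∈ T.edgeFinset, (b e).ncard ≤ (b e \ Set.range ι).toFinset.card + 2 := by
    intro e he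
    rw [mem_edgeFinset] at he
    rw [← Set.ncard_eq_toFinset_card']
    have hsub : b e ⊆ (b e \ Set.range ι) ∪ ι '' {u | u ∈ e} := by
      intro w hw
      by_cases hwι : w ∈ Set.range ι
      · obtain ⟨u, rfl⟩ := hwι
        exact .inr ⟨u, (hι u e he).1 hw, rfl⟩
      · exact .inl ⟨hw, hwι⟩
    have h₂ : {u | u ∈ e}.ncard ≤ 2 := by
      induction e with | _ x y
      have : {u | u ∈ s(x, y)} = {x, y} := by
        ext u
        simp
      rw [this]
      exact (Set.ncard_insert_le x {y}).trans (by rw [Set.ncard_singleton])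
    have h₃ : (ι '' {u | u ∈ e}).ncard ≤ _ := Set.ncard_image_le
    have h₄ := Set.ncard_le_ncard hsub
    have h₅ := Set.ncard_union_le (b e \ Set.range ι) (ι '' {u | u ∈ e})
    omega
  have h₂ : ∑ e ∈ T.edgeFinset, (b e \ Set.range ι).toFinset.card + Fintype.card U ≤
      Fintype.card W := by
    rw [← Finset.card_biUnion, ← Finset.card_univ, ← Finset.card_map ι,
      ← Finset.card_union_of_disjoint]
    · exact Finset.card_le_univ _
    · rw [Finset.disjoint_left]
      simp only [Finset.mem_biUnion, Set.mem_toFinset, Finset.mem_map]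
      rintro w ⟨e, -, h⟩ ⟨u, -, rfl⟩
      exact h.2 ⟨u, rfl⟩
    · intro e he f hf hne
      simp only [Finset.mem_coe, mem_edgeFinset] at he hf
      simp only [Function.onFun, Finset.disjoint_left, Set.mem_toFinset]
      exact fun w h h' ↦ h.2 (hint e he f hf hne ⟨h.1, h'.1⟩)
  have h₃ := Finset.sum_le_sum h₁
  rw [Finset.sum_add_distrib, Finset.sum_const, smul_eq_mul] at h₃
  rw [Nat.card_eq_fintype_card]
  omega

lemma numLeaves_le_numPaths_add_one [Finite U] [Finite W] [Nontrivial U] (hT : T.IsTree)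
    (hsp : TwoSparse T) (hexp : IsBlockExpansion T G) {H : SimpleGraph W} (hH : H ≤ G)
    (hF : IsLinearForest H) : numLeaves T ≤ numPaths H + 1 := by
  classical
  have := Fintype.ofFinite U
  have := Fintype.ofFinite W
  obtain ⟨ι, b, hι, hint, -, hadj⟩ := hexp
  have : Nonempty W := hT.connected.nonempty.map ι
  let isol : U → Sym2 U → Prop := fun v e ↦ ∀ x ∈ b e, ¬ H.Adj (ι v) x
  let I : U → Finset (Sym2 U) := fun v ↦ {e ∈ T.incidenceFinset v | isol v e}
  let D : Finset (Sym2 U) := {e ∈ T.edgeFinset | ∃ v ∈ e, 2 < ndeg T v ∧ isol v e}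
  let F : Sym2 U → Set (Sym2 W) := fun e ↦ {f ∈ H.edgeSet | ∀ x ∈ f, x ∈ b e}
  have hblock : ∀ e ∈ T.edgeFinset, (F e).ncard + 1 + (if e ∈ D then 1 else 0) ≤ (b e).ncard := by
    intro e he
    rw [mem_edgeFinset] at he
    split_ifs with heD
    · obtain ⟨-, v, hve, -, hv⟩ := Finset.mem_filter.1 heD
      have hvb : ι v ∈ b e := (hι v e he).2 hve
      have hne : (b e \ {ι v}).Nonempty := by
        obtain ⟨u, rfl⟩ := hve
        refine ⟨ι u, (hι u _ he).2 (by simp), fun h ↦ ?_⟩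
        exact (T.ne_of_adj he) (ι.injective h).symm
      have h₁ := ncard_edges_within_add_one_le hF.1 hne
      have h₂ : F e ⊆ {f ∈ H.edgeSet | ∀ x ∈ f, x ∈ b e \ {ι v}} := by
        rintro f ⟨hf, hfb⟩
        refine ⟨hf, fun x hx ↦ ⟨hfb x hx, ?_⟩⟩
        rintro rfl
        obtain ⟨y, rfl⟩ := hx
        exact hv y (hfb y (by simp)) hf
      have h₃ := Set.ncard_le_ncard h₂
      have h₄ := Set.ncard_sdiff_singleton_add_one hvb
      omega
    · refine ncard_edges_within_add_one_le hF.1 ?_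
      induction e with | _ x y
      exact ⟨ι x, (hι x _ he).2 (by simp)⟩
  have hedges : H.edgeSet.ncard ≤ ∑ e ∈ T.edgeFinset, (F e).ncard := by
    have hsub : H.edgeFinset ⊆ T.edgeFinset.biUnion fun e ↦ (F e).toFinset := by
      intro f hf
      rw [mem_edgeFinset] at hf
      induction f with | _ x y
      obtain ⟨-, e, he, hx, hy⟩ := (hadj x y).1 (hH hf)
      simp only [Finset.mem_biUnion, mem_edgeFinset, Set.mem_toFinset]
      refine ⟨e, he, hf, fun z hz ↦ ?_⟩
      rcases Sym2.mem_iff.1 hz with rfl | rfl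
      exacts [hx, hy]
    rw [ncard_edgeSet_eq_card_edgeFinset]
    refine (Finset.card_le_card hsub).trans (Finset.card_biUnion_le.trans (le_of_eq ?_))
    exact Finset.sum_congr rfl fun e _ ↦ (Set.ncard_eq_toFinset_card' _).symm
  have hI : ∀ v, ndeg T v - 2 ≤ (I v).card := by
    intro v
    have h₁ : (I v).card + {e ∈ T.incidenceFinset v | ¬ isol v e}.card = ndeg T v := by
      rw [ndeg_eq_degree, ← card_incidenceFinset_eq_degree]
      exact Finset.card_filter_add_card_filter_not _
    have h₂ : {e ∈ T.incidenceFinset v | ¬ isol v e}.card ≤ 2 := by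
      refine le_trans ?_ (hF.2 (ι v))
      rw [ndeg_eq_degree, ← card_neighborFinset_eq_degree]
      have hex : ∀ e ∈ ({e ∈ T.incidenceFinset v | ¬ isol v e} : Finset _),
          ∃ x, x ∈ b e ∧ H.Adj (ι v) x := by
        intro e he
        have := (Finset.mem_filter.1 he).2
        simp only [isol] at this
        push Not at this
        exact this
      choose! g hg using hex
      refine Finset.card_le_card_of_injOn g (fun e he ↦ ?_) fun e he f hf hef ↦ ?_
      · simpa using (hg e he).2
      · by_contra hne
        have he' := hg e he
        have hf' := hg f hf
        obtain ⟨heT, hve⟩ := (mem_incidenceFinset _ _ _).1 (Finset.mem_filter.1 he).1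
        obtain ⟨hfT, hvf⟩ := (mem_incidenceFinset _ _ _).1 (Finset.mem_filter.1 hf).1
        rw [← hef] at hf'
        obtain ⟨u, hu⟩ := hint e heT f hfT hne ⟨he'.1, hf'.1⟩
        rw [← hu] at he' hf'
        have huv : v ≠ u := fun h ↦ H.ne_of_adj he'.2 (h ▸ rfl)
        have hue := (hι u e heT).1 he'.1
        have huf := (hι u f hfT).1 hf'.1
        exact hne (((Sym2.mem_and_mem_iff huv).1 ⟨hve, hue⟩).trans
          ((Sym2.mem_and_mem_iff huv).1 ⟨hvf, huf⟩).symm)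
    omega
  have hD : ∑ v, (ndeg T v - 2) ≤ D.card := by
    have h₁ : ∑ v, (ndeg T v - 2) = ∑ v with 2 < ndeg T v, (ndeg T v - 2) := by
      refine (Finset.sum_subset (Finset.subset_univ _) fun v _ hv ↦ ?_).symm
      simp only [Finset.mem_filter, Finset.mem_univ, true_and] at hv
      omega
    rw [h₁]
    refine (Finset.sum_le_sum fun v _ ↦ hI v).trans ?_
    rw [← Finset.card_biUnion]
    · refine Finset.card_le_card fun e he ↦ ?_
      obtain ⟨v, hv, he⟩ := Finset.mem_biUnion.1 he
      obtain ⟨he, hiso⟩ := Finset.mem_filter.1 he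
      rw [mem_incidenceFinset] at he
      exact Finset.mem_filter.2 ⟨mem_edgeFinset.2 he.1, v, he.2, (Finset.mem_filter.1 hv).2, hiso⟩
    · intro u hu v hv huv
      simp only [Finset.coe_filter, Finset.mem_univ, true_and, Set.mem_ofPred_eq] at hu hv
      simp only [Function.onFun, Finset.disjoint_left]
      intro e heu hev
      obtain ⟨he, hue⟩ := (mem_incidenceFinset _ _ _).1 (Finset.mem_filter.1 heu).1
      obtain ⟨-, hve⟩ := (mem_incidenceFinset _ _ _).1 (Finset.mem_filter.1 hev).1
      rw [(Sym2.mem_and_mem_iff huv).1 ⟨hue, hve⟩] at he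
      rcases hsp u v he with h | h <;> omega
  have h₁ := Finset.sum_le_sum hblock
  have h₀ : ∑ e ∈ T.edgeFinset, (if e ∈ D then 1 else 0) = D.card := by
    rw [← Finset.card_filter, Finset.filter_mem_eq_inter,
      Finset.inter_eq_right.2 (Finset.filter_subset _ _)]
  rw [Finset.sum_add_distrib, Finset.sum_add_distrib, Finset.sum_const, smul_eq_mul, mul_one,
    h₀] at h₁
  have h₂ := sum_ncard_block_add_one_le hT ι b hι hint
  have h₃ := sum_ndeg_sub_two_add_two hT
  have h₄ := card_le_numPaths_add_ncard_edgeSet H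
  omega

end BlockExpansion

/-- **Theorem (Statement 7).** Let `T` be a 2-sparse tree with `ℓ ≥ 2` leaves and let
`G` be obtained from `T` by expanding each edge of `T` into a complete graph of
arbitrary order.  Then `P(G) = ℓ − 1`. -/
theorem blockExpansion_pathCoverNumber {U W : Type*} [Fintype U] [Fintype W]
    (T : SimpleGraph U) (G : SimpleGraph W)
    (hT : T.IsTree) (hsp : TwoSparse T) (hl : 2 ≤ numLeaves T)
    (hexp : IsBlockExpansion T G) :
    (pathCoverNumber G : ℤ) = numLeaves T - 1 := by
  obtain ⟨r, hr, r', -, hrr'⟩ := (Set.one_lt_ncard).1 (show 1 < numLeaves T from hl)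
  have : Nontrivial U := ⟨r, r', hrr'⟩
  have : Nontrivial W := hexp.choose.injective.nontrivial
  obtain ⟨K, hKG, hK, hleaves⟩ := exists_spanning_tree_of_isBlockExpansion hT hr hexp
  obtain ⟨H, hHK, hH, hpaths⟩ := exists_isLinearForest_le_of_isTree hK
  have hmem : numPaths H ∈ {k | ∃ H ≤ G, IsLinearForest H ∧ numPaths H = k} :=
    ⟨H, hHK.trans hKG, hH, rfl⟩
  have hle : pathCoverNumber G ≤ numPaths H := Nat.sInf_le hmem
  obtain ⟨H', hH'G, hH', heq⟩ := Nat.sInf_mem ⟨_, hmem⟩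
  have hge := numLeaves_le_numPaths_add_one hT hsp hexp hH'G hH'
  rw [heq] at hge
  change numLeaves T ≤ pathCoverNumber G + 1 at hge
  omega

end PaperPC
end
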